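/- arXiv:2508.12624 — 5 statements merged into one kernel-verified Lean document; each statement's English description precedes it below -/
import Mathlib

section
/- Let p be a prime and let Λ = U ⊕ U(p) ⊕ ⋯ ⊕ U(p) (one copy of U and g−1 copies of U(p), orthogonal direct sum). Then the assignment v ↦ [v*] induces a bijection from the set of Γ_Λ-equivalence classes of primitive vectors of Λ onto the discriminant group D_Λ. -/
noncomputable section

open Submodule

variable {V : Type} [AddCommGroup V] [Module ℚ V]

/-- The dual lattice `Λ^∨ = {v ∈ Λ⊗ℚ : (v, Λ) ⊆ ℤ}` of a lattice `L` (inside the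
ambient rational vector space `V = Λ⊗ℚ`) with respect to the form `B`. -/
def dualLattice (B : V →ₗ[ℚ] V →ₗ[ℚ] ℚ) (L : Submodule ℤ V) : Submodule ℤ V where
  carrier := {v : V | ∀ x ∈ L, ∃ n : ℤ, B v x = (n : ℚ)}
  zero_mem' := fun x _ => ⟨0, by simp⟩
  add_mem' := by
    intro a b ha hb x hx
    obtain ⟨n, hn⟩ := ha x hx
    obtain ⟨m, hm⟩ := hb x hx
    exact ⟨n + m, by rw [map_add, LinearMap.add_apply, hn, hm]; push_cast; ring⟩
  smul_mem' := by
    intro c a ha x hx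
    obtain ⟨n, hn⟩ := ha x hx
    refine ⟨c * n, ?_⟩
    have h1 : B (c • a) x = (B.flip x) (c • a) := rfl
    rw [h1, map_zsmul, LinearMap.flip_apply, hn, zsmul_eq_mul]
    push_cast; ring

/-- A vector `v` is primitive in the lattice `L` if `ℚv ∩ L = ℤv`. -/
def IsPrimitive (L : Submodule ℤ V) (v : V) : Prop :=
  v ∈ L ∧ (Submodule.span ℚ {v}).restrictScalars ℤ ⊓ L = Submodule.span ℤ {v}

/-- `div(v) = d`, i.e. the ideal `(v, L) ⊆ ℤ` is generated by the positive integer `d`. -/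
def HasDiv (B : V →ₗ[ℚ] V →ₗ[ℚ] ℚ) (L : Submodule ℤ V) (v : V) (d : ℕ) : Prop :=
  0 < d ∧ (∀ x ∈ L, ∃ n : ℤ, B v x = (n : ℚ) * (d : ℚ)) ∧ (∃ x ∈ L, B v x = (d : ℚ))

/-- `v* = v / div(v)`. -/
def vstar (v : V) (d : ℕ) : V := ((d : ℚ))⁻¹ • v

lemma vstar_mem {B : V →ₗ[ℚ] V →ₗ[ℚ] ℚ} {L : Submodule ℤ V} {v : V} {d : ℕ}
    (h : HasDiv B L v d) : vstar v d ∈ dualLattice B L := by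
  intro x hx
  obtain ⟨n, hn⟩ := h.2.1 x hx
  refine ⟨n, ?_⟩
  have hd : (d : ℚ) ≠ 0 := Nat.cast_ne_zero.mpr h.1.ne'
  show B (((d : ℚ))⁻¹ • v) x = (n : ℚ)
  rw [map_smul, LinearMap.smul_apply, hn, smul_eq_mul]
  field_simp

/-- The discriminant group `D_Λ = Λ^∨ / Λ`. -/
abbrev DiscGroup (B : V →ₗ[ℚ] V →ₗ[ℚ] ℚ) (L : Submodule ℤ V) :=
  dualLattice B L ⧸ (L.comap (dualLattice B L).subtype)

/-- The class of an element of the dual lattice in the discriminant group. -/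
def discCls (B : V →ₗ[ℚ] V →ₗ[ℚ] ℚ) (L : Submodule ℤ V) (v : dualLattice B L) :
    DiscGroup B L := Submodule.Quotient.mk v

/-- `γ` is an isometry of the lattice `L`, i.e. an element of `Sp(Λ)` (viewed as a
rational linear automorphism of the ambient space preserving `L` and the form). -/
def IsIsometry (B : V →ₗ[ℚ] V →ₗ[ℚ] ℚ) (L : Submodule ℤ V) (γ : V ≃ₗ[ℚ] V) : Prop :=
  (∀ v, v ∈ L ↔ γ v ∈ L) ∧ ∀ v w, B (γ v) (γ w) = B v w

/-- `γ` lies in `Γ_Λ`: it is an isometry of `L` acting trivially on the discriminant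
group, i.e. `γ(v) ≡ v mod Λ` for every `v ∈ Λ^∨`. -/
def InGamma (B : V →ₗ[ℚ] V →ₗ[ℚ] ℚ) (L : Submodule ℤ V) (γ : V ≃ₗ[ℚ] V) : Prop :=
  IsIsometry B L γ ∧ ∀ v ∈ dualLattice B L, γ v - v ∈ L

lemma isometry_dual_mem {B : V →ₗ[ℚ] V →ₗ[ℚ] ℚ} {L : Submodule ℤ V} {γ : V ≃ₗ[ℚ] V}
    (h : IsIsometry B L γ) {u : V} (hu : u ∈ dualLattice B L) :
    γ u ∈ dualLattice B L := by
  intro x hx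
  have hx' : γ.symm x ∈ L := by
    rw [h.1 (γ.symm x), LinearEquiv.apply_symm_apply]
    exact hx
  obtain ⟨n, hn⟩ := hu (γ.symm x) hx'
  refine ⟨n, ?_⟩
  have := h.2 u (γ.symm x)
  rw [LinearEquiv.apply_symm_apply] at this
  rw [this, hn]

/-- The transvection `T_{l,m} : v ↦ v + (l,v)m + (m,v)l` on the rational vector space. -/
def transvection (B : V →ₗ[ℚ] V →ₗ[ℚ] ℚ) (l m : V) : V →ₗ[ℚ] V :=
  LinearMap.id + (B l).smulRight m + (B m).smulRight l

/-- An orthogonal decomposition `Λ = U ⊕ Λ'` with `U` a hyperbolic plane spanned by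
`e, f` with `(e,f) = 1`. -/
def OrthoDecompU (B : V →ₗ[ℚ] V →ₗ[ℚ] ℚ) (L : Submodule ℤ V)
    (e f : V) (L' : Submodule ℤ V) : Prop :=
  e ∈ L ∧ f ∈ L ∧ L' ≤ L ∧ B e f = 1 ∧
  (∀ z ∈ L', B e z = 0 ∧ B f z = 0) ∧
  Submodule.span ℤ {e, f} ⊔ L' = L

/-- An orthogonal decomposition `Λ = U₁ ⊕ U₂ ⊕ Λ''` with `U₁, U₂` hyperbolic planes. -/
def OrthoDecompUU (B : V →ₗ[ℚ] V →ₗ[ℚ] ℚ) (L : Submodule ℤ V)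
    (e₁ f₁ e₂ f₂ : V) (L'' : Submodule ℤ V) : Prop :=
  e₁ ∈ L ∧ f₁ ∈ L ∧ e₂ ∈ L ∧ f₂ ∈ L ∧ L'' ≤ L ∧
  B e₁ f₁ = 1 ∧ B e₂ f₂ = 1 ∧
  B e₁ e₂ = 0 ∧ B e₁ f₂ = 0 ∧ B f₁ e₂ = 0 ∧ B f₁ f₂ = 0 ∧
  (∀ z ∈ L'', B e₁ z = 0 ∧ B f₁ z = 0 ∧ B e₂ z = 0 ∧ B f₂ z = 0) ∧
  Submodule.span ℤ {e₁, f₁} ⊔ Submodule.span ℤ {e₂, f₂} ⊔ L'' = L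

/-- An orthogonal decomposition `Λ = U ⊕ U(p) ⊕ ⋯ ⊕ U(p)`. -/
def OrthoDecompUUp (B : V →ₗ[ℚ] V →ₗ[ℚ] ℚ) (L : Submodule ℤ V) (p : ℕ)
    (e f : V) {ι : Type} (E F : ι → V) : Prop :=
  e ∈ L ∧ f ∈ L ∧ (∀ i, E i ∈ L) ∧ (∀ i, F i ∈ L) ∧
  B e f = 1 ∧ (∀ i, B (E i) (F i) = (p : ℚ)) ∧
  (∀ i, B e (E i) = 0 ∧ B e (F i) = 0 ∧ B f (E i) = 0 ∧ B f (F i) = 0) ∧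
  (∀ i j, i ≠ j → B (E i) (E j) = 0 ∧ B (E i) (F j) = 0 ∧ B (F i) (F j) = 0) ∧
  Submodule.span ℤ ({e, f} ∪ Set.range E ∪ Set.range F) = L

/-- An orthogonal decomposition `Λ = U(d₁) ⊕ ⋯ ⊕ U(d_g)`. -/
def OrthoDecompType (B : V →ₗ[ℚ] V →ₗ[ℚ] ℚ) (L : Submodule ℤ V) {g : ℕ}
    (d : Fin g → ℕ) (E F : Fin g → V) : Prop :=
  (∀ i, E i ∈ L) ∧ (∀ i, F i ∈ L) ∧
  (∀ i, B (E i) (F i) = (d i : ℚ)) ∧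
  (∀ i j, i ≠ j → B (E i) (E j) = 0 ∧ B (E i) (F j) = 0 ∧ B (F i) (F j) = 0) ∧
  Submodule.span ℤ (Set.range E ∪ Set.range F) = L

lemma coe_int_addCircle (n : ℤ) : (((n : ℚ) : AddCircle (1 : ℚ))) = 0 := by
  have hmem : ((n : ℚ)) ∈ AddSubgroup.zmultiples (1 : ℚ) := ⟨n, by simp⟩
  exact (QuotientAddGroup.eq_zero_iff _).mpr hmem

lemma bilin_antisymm (B : V →ₗ[ℚ] V →ₗ[ℚ] ℚ) (halt : ∀ v, B v v = 0) (a b : V) :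
    B a b = - B b a := by
  have h := halt (a + b)
  simp only [map_add, LinearMap.add_apply] at h
  rw [halt a, halt b] at h
  linarith

/-- The `ℚ/ℤ`-valued pairing on the dual lattice. -/
def rationalPairing (B : V →ₗ[ℚ] V →ₗ[ℚ] ℚ) (L : Submodule ℤ V) :
    dualLattice B L →ₗ[ℤ] dualLattice B L →ₗ[ℤ] AddCircle (1 : ℚ) :=
  LinearMap.mk₂ ℤ (fun v w => ((B v.1 w.1 : ℚ) : AddCircle (1 : ℚ)))
    (fun v v' w => by
      beta_reduce
      rw [Submodule.coe_add, map_add, LinearMap.add_apply]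
      exact QuotientAddGroup.mk_add (AddSubgroup.zmultiples (1 : ℚ)) _ _)
    (fun c v w => by
      beta_reduce
      have h1 : B ((c • v : dualLattice B L) : V) (w : V)
          = c • (B (v : V) (w : V)) := by
        have h2 : B ((c • v : dualLattice B L) : V) (w : V)
            = (B.flip (w : V)) ((c • v : dualLattice B L) : V) := rfl
        rw [h2, Submodule.coe_smul, map_zsmul, LinearMap.flip_apply]
      rw [h1]
      exact QuotientAddGroup.mk_zsmul (AddSubgroup.zmultiples (1 : ℚ)) _ _
    )
    (fun v w w' => by
      beta_reduce
      rw [Submodule.coe_add, map_add]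
      exact QuotientAddGroup.mk_add (AddSubgroup.zmultiples (1 : ℚ)) _ _)
    (fun c v w => by
      beta_reduce
      rw [Submodule.coe_smul, map_zsmul]
      exact QuotientAddGroup.mk_zsmul (AddSubgroup.zmultiples (1 : ℚ)) _ _)

/-- The discriminant form on `D_Λ`, with values in `ℚ/ℤ`. -/
def discForm (B : V →ₗ[ℚ] V →ₗ[ℚ] ℚ) (L : Submodule ℤ V) (halt : ∀ v, B v v = 0) :
    DiscGroup B L →ₗ[ℤ] DiscGroup B L →ₗ[ℤ] AddCircle (1 : ℚ) :=
  (Submodule.liftQ _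
    ((Submodule.liftQ _ (rationalPairing B L) (by
      intro v hv
      rw [LinearMap.mem_ker]
      refine LinearMap.ext fun w => ?_
      have hv' : (v : V) ∈ L := hv
      obtain ⟨n, hn⟩ := w.2 (v : V) hv'
      show ((B (v : V) (w : V) : ℚ) : AddCircle (1 : ℚ)) = 0
      have h3 : B (v : V) (w : V) = ((-n : ℤ) : ℚ) := by
        rw [bilin_antisymm B halt, hn]; push_cast; ring
      rw [h3]
      exact coe_int_addCircle _)).flip) (by
      intro w hw
      rw [LinearMap.mem_ker]
      refine LinearMap.ext fun x => ?_
      obtain ⟨v, rfl⟩ := Submodule.Quotient.mk_surjective _ x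
      have hw' : (w : V) ∈ L := hw
      obtain ⟨n, hn⟩ := v.2 (w : V) hw'
      show ((B (v : V) (w : V) : ℚ) : AddCircle (1 : ℚ)) = 0
      rw [hn]
      exact coe_int_addCircle _)).flip

/-- The orthogonal complement of a subgroup of the discriminant group with respect to
the discriminant form. -/
def discOrth (B : V →ₗ[ℚ] V →ₗ[ℚ] ℚ) (L : Submodule ℤ V) (halt : ∀ v, B v v = 0)
    (D' : Submodule ℤ (DiscGroup B L)) : Submodule ℤ (DiscGroup B L) :=
  ⨅ y ∈ D', LinearMap.ker ((discForm B L halt).flip y)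

/-- A splitting element of the discriminant group: `x` of order `d` lies in a subgroup
`D' ≅ (ℤ/d)²` with `D_Λ = D' ⊕ D'^⊥`. -/
def IsSplitElem (B : V →ₗ[ℚ] V →ₗ[ℚ] ℚ) (L : Submodule ℤ V) (halt : ∀ v, B v v = 0)
    (x : DiscGroup B L) : Prop :=
  ∃ D' : Submodule ℤ (DiscGroup B L), x ∈ D' ∧
    Nonempty (D' ≃+ (ZMod (addOrderOf x) × ZMod (addOrderOf x))) ∧
    D' ⊔ discOrth B L halt D' = ⊤ ∧ D' ⊓ discOrth B L halt D' = ⊥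

/-- The orthogonal complement `Λ₁^⊥ = {z ∈ Λ : (z, Λ₁) = 0}` of a sublattice inside `L`. -/
def orthCompIn (B : V →ₗ[ℚ] V →ₗ[ℚ] ℚ) (L L₁ : Submodule ℤ V) : Submodule ℤ V where
  carrier := {z | z ∈ L ∧ ∀ y ∈ L₁, B z y = 0}
  zero_mem' := ⟨L.zero_mem, fun y _ => by simp⟩
  add_mem' := by
    intro a b ha hb
    refine ⟨L.add_mem ha.1 hb.1, fun y hy => ?_⟩
    rw [map_add, LinearMap.add_apply, ha.2 y hy, hb.2 y hy, add_zero]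
  smul_mem' := by
    intro c a ha
    refine ⟨L.smul_mem c ha.1, fun y hy => ?_⟩
    have h1 : B (c • a) y = (B.flip y) (c • a) := rfl
    rw [h1, map_zsmul, LinearMap.flip_apply, ha.2 y hy, smul_zero]

/-- A splitting (primitive) vector: `v` lies in a rank 2 sublattice `Λ₁` with
`Λ = Λ₁ ⊕ Λ₁^⊥` (orthogonal direct sum). -/
def IsSplitVec (B : V →ₗ[ℚ] V →ₗ[ℚ] ℚ) (L : Submodule ℤ V) (v : V) : Prop :=
  ∃ L₁ : Submodule ℤ V, v ∈ L₁ ∧ L₁ ≤ L ∧ Module.finrank ℤ L₁ = 2 ∧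
    L₁ ⊔ orthCompIn B L L₁ = L ∧ L₁ ⊓ orthCompIn B L L₁ = ⊥

end


namespace EichlerAux

variable {V : Type} [AddCommGroup V] [Module ℚ V]

lemma zmem {L : Submodule ℤ V} {x : V} (hx : x ∈ L) (n : ℤ) : (n : ℚ) • x ∈ L := by
  rw [Int.cast_smul_eq_zsmul]
  exact L.smul_mem n hx

/-- Same orbit under the discriminant kernel. -/
def Rel (B : V →ₗ[ℚ] V →ₗ[ℚ] ℚ) (L : Submodule ℤ V) (v w : V) : Prop :=
  ∃ γ : V ≃ₗ[ℚ] V, InGamma B L γ ∧ γ v = w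

lemma isIsometry_symm {B : V →ₗ[ℚ] V →ₗ[ℚ] ℚ} {L : Submodule ℤ V} {γ : V ≃ₗ[ℚ] V}
    (h : IsIsometry B L γ) : IsIsometry B L γ.symm := by
  refine ⟨fun v => ?_, fun v w => ?_⟩
  · rw [h.1 (γ.symm v), LinearEquiv.apply_symm_apply]
  · rw [← h.2, LinearEquiv.apply_symm_apply, LinearEquiv.apply_symm_apply]

lemma Rel.symm {B : V →ₗ[ℚ] V →ₗ[ℚ] ℚ} {L : Submodule ℤ V} {v w : V}
    (h : Rel B L v w) : Rel B L w v := by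
  obtain ⟨γ, hγ, rfl⟩ := h
  refine ⟨γ.symm, ⟨isIsometry_symm hγ.1, fun u hu => ?_⟩, by simp⟩
  have h1 := hγ.2 _ (isometry_dual_mem (isIsometry_symm hγ.1) hu)
  rw [LinearEquiv.apply_symm_apply] at h1
  rw [← neg_sub]
  exact L.neg_mem h1

lemma Rel.trans {B : V →ₗ[ℚ] V →ₗ[ℚ] ℚ} {L : Submodule ℤ V} {u v w : V}
    (h : Rel B L u v) (h' : Rel B L v w) : Rel B L u w := by
  obtain ⟨γ, hγ, rfl⟩ := h
  obtain ⟨δ, hδ, rfl⟩ := h'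
  refine ⟨γ.trans δ, ⟨⟨fun x => ?_, fun x y => ?_⟩, fun x hx => ?_⟩, rfl⟩
  · rw [hγ.1.1, hδ.1.1]; rfl
  · rw [LinearEquiv.trans_apply, LinearEquiv.trans_apply, hδ.1.2, hγ.1.2]
  · have h1 := hγ.2 x hx
    have h2 := hδ.2 _ (isometry_dual_mem hγ.1 hx)
    have := L.add_mem h2 h1
    rw [LinearEquiv.trans_apply]
    simpa using this

lemma Rel.refl (B : V →ₗ[ℚ] V →ₗ[ℚ] ℚ) (L : Submodule ℤ V) (v : V) : Rel B L v v :=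
  ⟨LinearEquiv.refl ℚ V, ⟨⟨fun _ => Iff.rfl, fun _ _ => rfl⟩, fun x _ => by simp⟩, rfl⟩

lemma rel_mk {B : V →ₗ[ℚ] V →ₗ[ℚ] ℚ} {L : Submodule ℤ V}
    (hint : ∀ x ∈ L, ∀ y ∈ L, ∃ n : ℤ, B x y = (n : ℚ))
    (T S : V →ₗ[ℚ] V) (hTS : ∀ x, T (S x) = x) (hST : ∀ x, S (T x) = x)
    (hB : ∀ x y, B (T x) (T y) = B x y)
    (hT : ∀ x ∈ dualLattice B L, T x - x ∈ L)
    (hS : ∀ x ∈ dualLattice B L, S x - x ∈ L) (v : V) : Rel B L v (T v) := by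
  have hle : L ≤ dualLattice B L := fun x hx y hy => hint x hx y hy
  refine ⟨LinearEquiv.ofLinearMap T S (LinearMap.ext hTS) (LinearMap.ext hST),
    ⟨⟨fun x => ?_, fun x y => hB x y⟩, fun x hx => hT x hx⟩, rfl⟩
  rw [LinearEquiv.coe_ofLinearMap]
  constructor
  · intro hx
    have := L.add_mem (hT x (hle hx)) hx
    simpa using this
  · intro hx
    have := L.add_mem (hS _ (hle hx)) hx
    simpa [hST] using this

lemma rel_trans_vec {B : V →ₗ[ℚ] V →ₗ[ℚ] ℚ} {L : Submodule ℤ V}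
    (halt : ∀ v, B v v = 0)
    (hint : ∀ x ∈ L, ∀ y ∈ L, ∃ n : ℤ, B x y = (n : ℚ))
    {l m : V} (hl : l ∈ L) (hm : m ∈ L) (hlm : B l m = 0) (v : V) :
    Rel B L v (v + B l v • m + B m v • l) := by
  have hml : B m l = 0 := by rw [bilin_antisymm B halt, hlm, neg_zero]
  have key : ∀ m' ∈ L, ∀ x ∈ dualLattice B L, transvection B l m' x - x ∈ L := by
    intro m' hm' x hx
    obtain ⟨a, ha⟩ := hx l hl
    obtain ⟨b, hb⟩ := hx m' hm'
    have h1 : B l x = ((-a : ℤ) : ℚ) := by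
      rw [bilin_antisymm B halt, ha]; push_cast; ring
    have h2 : B m' x = ((-b : ℤ) : ℚ) := by
      rw [bilin_antisymm B halt, hb]; push_cast; ring
    have h3 : transvection B l m' x - x = ((-a : ℤ) : ℚ) • m' + ((-b : ℤ) : ℚ) • l := by
      simp only [transvection, LinearMap.add_apply, LinearMap.id_apply,
        LinearMap.smulRight_apply, h1, h2]
      abel
    rw [h3]
    exact L.add_mem (zmem hm' _) (zmem hl _)
  refine rel_mk hint (transvection B l m) (transvection B l (-m)) ?_ ?_ ?_
    (key m hm) (key (-m) (L.neg_mem hm)) v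
  · intro x
    simp only [transvection, LinearMap.add_apply, LinearMap.id_apply,
        LinearMap.smulRight_apply, map_add, map_smul, map_neg, LinearMap.neg_apply, halt, hlm,
        hml, smul_eq_mul]
    module
  · intro x
    simp only [transvection, LinearMap.add_apply, LinearMap.id_apply,
        LinearMap.smulRight_apply, map_add, map_smul, map_neg, LinearMap.neg_apply, halt, hlm,
        hml, smul_eq_mul]
    module
  · intro x y
    simp only [transvection, LinearMap.add_apply, LinearMap.id_apply,
        LinearMap.smulRight_apply, map_add, map_smul, LinearMap.smul_apply, halt, hlm,
        hml, smul_eq_mul]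
    rw [bilin_antisymm B halt x m, bilin_antisymm B halt x l]
    ring

/-- The action of a 2 by 2 matrix on the hyperbolic plane `⟨e, f⟩`. -/
noncomputable def slMap (B : V →ₗ[ℚ] V →ₗ[ℚ] ℚ) (e f : V) (a b c d : ℤ) : V →ₗ[ℚ] V :=
  LinearMap.id + ((-((a : ℚ) - 1)) • B f + (b : ℚ) • B e).smulRight e
    + ((-(c : ℚ)) • B f + ((d : ℚ) - 1) • B e).smulRight f

lemma slMap_apply (B : V →ₗ[ℚ] V →ₗ[ℚ] ℚ) (e f : V) (a b c d : ℤ) (x : V) :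
    slMap B e f a b c d x = x + ((-((a : ℚ) - 1)) * B f x + (b : ℚ) * B e x) • e
      + ((-(c : ℚ)) * B f x + ((d : ℚ) - 1) * B e x) • f := by
  simp [slMap]

lemma slMap_comp {B : V →ₗ[ℚ] V →ₗ[ℚ] ℚ} (halt : ∀ v, B v v = 0) {e f : V}
    (hef : B e f = 1) (a b c d : ℤ) (h : a * d - b * c = 1) (x : V) :
    slMap B e f a b c d (slMap B e f d (-b) (-c) a x) = x := by
  have hfe : B f e = -1 := by rw [bilin_antisymm B halt, hef]
  have hq : (a : ℚ) * d - b * c = 1 := by exact_mod_cast h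
  have hq' : (a : ℚ) * d = 1 + b * c := by linarith
  simp only [slMap_apply, map_add, map_smul, halt, hef, hfe, smul_eq_mul]
  push_cast
  match_scalars
  · ring
  · linear_combination (-(B f x)) * hq
  · linear_combination (B e x) * hq

lemma rel_sl {B : V →ₗ[ℚ] V →ₗ[ℚ] ℚ} {L : Submodule ℤ V}
    (halt : ∀ v, B v v = 0)
    (hint : ∀ x ∈ L, ∀ y ∈ L, ∃ n : ℤ, B x y = (n : ℚ))
    {e f : V} (he : e ∈ L) (hf : f ∈ L) (hef : B e f = 1)
    (a b c d : ℤ) (h : a * d - b * c = 1) (v : V) :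
    Rel B L v (slMap B e f a b c d v) := by
  have hfe : B f e = -1 := by rw [bilin_antisymm B halt, hef]
  have hq : (a : ℚ) * d - b * c = 1 := by exact_mod_cast h
  have key : ∀ a b c d : ℤ, ∀ x ∈ dualLattice B L, slMap B e f a b c d x - x ∈ L := by
    intro a b c d x hx
    obtain ⟨m, hm⟩ := hx e he
    obtain ⟨n, hn⟩ := hx f hf
    have h1 : B e x = -(m : ℚ) := by rw [bilin_antisymm B halt, hm]
    have h2 : B f x = -(n : ℚ) := by rw [bilin_antisymm B halt, hn]
    have h3 : slMap B e f a b c d x - x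
        = (((a - 1) * n - b * m : ℤ) : ℚ) • e + ((c * n - (d - 1) * m : ℤ) : ℚ) • f := by
      rw [slMap_apply, h1, h2]
      push_cast
      module
    rw [h3]
    exact L.add_mem (zmem he _) (zmem hf _)
  refine rel_mk hint (slMap B e f a b c d) (slMap B e f d (-b) (-c) a)
    (slMap_comp halt hef a b c d h) ?_ ?_ (key _ _ _ _) (key _ _ _ _) v
  · intro x
    have := slMap_comp halt hef d (-b) (-c) a (by linarith) x
    simpa using this
  · intro x y
    simp only [slMap_apply, map_add, map_smul, halt, hef, hfe, smul_eq_mul,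
      LinearMap.add_apply, LinearMap.smul_apply]
    rw [bilin_antisymm B halt x e, bilin_antisymm B halt x f]
    linear_combination (B e x * B f y - B f x * B e y) * hq

lemma rel_gcd {B : V →ₗ[ℚ] V →ₗ[ℚ] ℚ} {L : Submodule ℤ V}
    (halt : ∀ v, B v v = 0)
    (hint : ∀ x ∈ L, ∀ y ∈ L, ∃ n : ℤ, B x y = (n : ℚ))
    {e f : V} (he : e ∈ L) (hf : f ∈ L) (hef : B e f = 1)
    {z : V} (hez : B e z = 0) (hfz : B f z = 0) {a b d a' b' s t : ℤ} (hd : d ≠ 0)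
    (ha : a = d * a') (hb : b = d * b') (hst : d = a * s + b * t) :
    Rel B L ((a : ℚ) • e + (b : ℚ) • f + z) ((d : ℚ) • e + z) := by
  have hfe : B f e = -1 := by rw [bilin_antisymm B halt, hef]
  have h1 : s * a' - t * (-b') = 1 := by
    apply mul_left_cancel₀ hd
    rw [ha, hb] at hst
    linear_combination -hst
  have := rel_sl halt hint he hf hef s t (-b') a' h1 ((a : ℚ) • e + (b : ℚ) • f + z)
  convert this using 1
  simp only [slMap_apply, map_add, map_smul, halt, hef, hfe, hez, hfz, smul_eq_mul]
  have hqa : (a : ℚ) = d * a' := by exact_mod_cast ha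
  have hqb : (b : ℚ) = d * b' := by exact_mod_cast hb
  have hqd : (d : ℚ) = a * s + b * t := by exact_mod_cast hst
  push_cast
  match_scalars
  · linear_combination hqd
  · ring
  · rw [hqa, hqb]; ring

lemma hasDiv_rel {B : V →ₗ[ℚ] V →ₗ[ℚ] ℚ} {L : Submodule ℤ V} {v w : V} {d : ℕ}
    (h : Rel B L v w) (hd : HasDiv B L v d) : HasDiv B L w d := by
  obtain ⟨γ, hγ, rfl⟩ := h
  obtain ⟨h0, h1, x, hx, h2⟩ := hd
  refine ⟨h0, fun y hy => ?_, γ x, (hγ.1.1 x).1 hx, by rw [hγ.1.2, h2]⟩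
  obtain ⟨n, hn⟩ := h1 (γ.symm y) (((isIsometry_symm hγ.1).1 y).1 hy)
  refine ⟨n, ?_⟩
  rw [← hn, ← hγ.1.2 v (γ.symm y), LinearEquiv.apply_symm_apply]

lemma hasDiv_unique {B : V →ₗ[ℚ] V →ₗ[ℚ] ℚ} {L : Submodule ℤ V} {v : V} {d d' : ℕ}
    (hd : HasDiv B L v d) (hd' : HasDiv B L v d') : d = d' := by
  have key : ∀ d d' : ℕ, HasDiv B L v d → HasDiv B L v d' → d ∣ d' := by
    intro d d' hd hd'
    obtain ⟨x, hx, h⟩ := hd'.2.2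
    obtain ⟨n, hn⟩ := hd.2.1 x hx
    rw [h] at hn
    have : (d' : ℤ) = n * d := by exact_mod_cast hn
    exact Int.natCast_dvd_natCast.1 ⟨n, by rw [this]; ring⟩
  exact Nat.dvd_antisymm (key _ _ hd hd') (key _ _ hd' hd)

/-- Every lattice vector of divisibility `d` is equivalent to some `d e + z`, `z ⟂ e, f`. -/
lemma rel_normal {B : V →ₗ[ℚ] V →ₗ[ℚ] ℚ} {L : Submodule ℤ V}
    (halt : ∀ v, B v v = 0)
    (hint : ∀ x ∈ L, ∀ y ∈ L, ∃ n : ℤ, B x y = (n : ℚ))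
    {e f : V} (he : e ∈ L) (hf : f ∈ L) (hef : B e f = 1)
    {v : V} (hv : v ∈ L) {d : ℕ} (hd : HasDiv B L v d) :
    ∃ z ∈ L, B e z = 0 ∧ B f z = 0 ∧ Rel B L v ((d : ℚ) • e + z) := by
  have hfe : B f e = -1 := by rw [bilin_antisymm B halt, hef]
  -- first step: kill the `f` coordinate
  have step1 : ∃ (g : ℤ), ∃ z ∈ L, B e z = 0 ∧ B f z = 0 ∧ Rel B L v ((g : ℚ) • e + z) := by
    obtain ⟨a, ha⟩ := hint v hv f hf
    obtain ⟨b, hb⟩ := hint e he v hv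
    have hfv : B f v = -(a : ℚ) := by rw [bilin_antisymm B halt, ha]
    have hz1 : B e (v - (a : ℚ) • e - (b : ℚ) • f) = 0 := by
      simp [halt, hef, hb]
    have hz2 : B f (v - (a : ℚ) • e - (b : ℚ) • f) = 0 := by
      simp [halt, hfe, hfv]
    have hzL : v - (a : ℚ) • e - (b : ℚ) • f ∈ L :=
      L.sub_mem (L.sub_mem hv (zmem he _)) (zmem hf _)
    have hv' : v = (a : ℚ) • e + (b : ℚ) • f + (v - (a : ℚ) • e - (b : ℚ) • f) := by abel
    by_cases h0 : (Int.gcd a b : ℤ) = 0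
    · have h0' : a = 0 ∧ b = 0 := by
        rw [← Int.gcd_eq_zero_iff]; exact_mod_cast h0
      refine ⟨0, v, hv, ?_, ?_, ?_⟩
      · rw [hb, h0'.2]; simp
      · rw [hfv, h0'.1]; simp
      · simpa using Rel.refl B L v
    · obtain ⟨a', ha'⟩ := Int.gcd_dvd_left a b
      obtain ⟨b', hb'⟩ := Int.gcd_dvd_right a b
      have := rel_gcd halt hint he hf hef hz1 hz2 h0 ha' hb' (Int.gcd_eq_gcd_ab a b)
      rw [← hv'] at this
      exact ⟨_, _, hzL, hz1, hz2, this⟩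
  obtain ⟨g, z, hz, hez, hfz, hrel⟩ := step1
  have hd1 := hasDiv_rel hrel hd
  set v1 := (g : ℚ) • e + z with hv1
  have hze : B z e = 0 := by rw [bilin_antisymm B halt, hez, neg_zero]
  have hzf : B z f = 0 := by rw [bilin_antisymm B halt, hfz, neg_zero]
  have hv1L : v1 ∈ L := L.add_mem (zmem he _) hz
  obtain ⟨x, hx, hdx⟩ := hd1.2.2
  obtain ⟨s, hs⟩ := hint e he x hx
  obtain ⟨t, ht⟩ := hint f hf x hx
  obtain ⟨g', hg'⟩ := hd1.2.1 f hf
  have hv1f : B v1 f = g := by simp [hv1, hef, hzf]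
  have hv1e : B v1 e = 0 := by simp [hv1, halt, hze]
  set m := x + (t : ℚ) • e - (s : ℚ) • f with hm
  have hmL : m ∈ L := L.sub_mem (L.add_mem hx (zmem he _)) (zmem hf _)
  have hem : B e m = 0 := by simp [hm, halt, hef, hs]
  have hfm : B f m = 0 := by simp [hm, halt, hfe, ht]
  obtain ⟨k, hk⟩ := hd1.2.1 m hmL
  have hkm : B v1 m = d - s * g := by simp [hm, hv1f, hv1e, hdx]
  have hr2 := rel_trans_vec halt hint hf (L.neg_mem hmL) (by simp [hfm]) v1
  have heq : v1 + B f v1 • (-m) + B (-m) v1 • f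
      = (g : ℚ) • e + ((d * k : ℤ) : ℚ) • f + (z + (g : ℚ) • m) := by
    rw [bilin_antisymm B halt f v1, hv1f, bilin_antisymm B halt (-m) v1, map_neg, neg_neg, hk,
      hv1]
    push_cast
    module
  rw [heq] at hr2
  have hz1 : B e (z + (g : ℚ) • m) = 0 := by simp [hez, hem]
  have hz2 : B f (z + (g : ℚ) • m) = 0 := by simp [hfz, hfm]
  have hgd : g = (d : ℤ) * g' := by
    rw [hv1f] at hg'
    have : g = g' * d := by exact_mod_cast hg'
    rw [this]; ring
  have hbez : (d : ℤ) = g * s + (d * k) * 1 := by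
    rw [hk] at hkm
    have : k * (d : ℤ) = d - s * g := by exact_mod_cast hkm
    linear_combination -this
  have hd0 : (d : ℤ) ≠ 0 := by exact_mod_cast hd.1.ne'
  have hr3 := rel_gcd halt hint he hf hef hz1 hz2 hd0 hgd rfl hbez
  refine ⟨_, L.add_mem hz (zmem hmL g), hz1, hz2, ?_⟩
  have := hrel.trans (hr2.trans hr3)
  simpa using this

/-- Two normal forms congruent modulo `d` are equivalent. -/
lemma rel_normal_normal {B : V →ₗ[ℚ] V →ₗ[ℚ] ℚ} {L : Submodule ℤ V}
    (halt : ∀ v, B v v = 0)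
    (hint : ∀ x ∈ L, ∀ y ∈ L, ∃ n : ℤ, B x y = (n : ℚ))
    {e f : V} (he : e ∈ L) (hf : f ∈ L) (hef : B e f = 1) {d : ℕ}
    {z z' m : V} (hez : B e z = 0) (hfz : B f z = 0)
    (hm : m ∈ L) (hem : B e m = 0) (hfm : B f m = 0)
    (hzz : z = z' + (d : ℚ) • m) (hd : HasDiv B L ((d : ℚ) • e + z) d) :
    Rel B L ((d : ℚ) • e + z) ((d : ℚ) • e + z') := by
  have hfe : B f e = -1 := by rw [bilin_antisymm B halt, hef]
  have hme : B m e = 0 := by rw [bilin_antisymm B halt, hem, neg_zero]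
  have hr := rel_trans_vec halt hint hf hm hfm ((d : ℚ) • e + z)
  obtain ⟨k, hk⟩ := hd.2.1 m hm
  have h1 : B m ((d : ℚ) • e + z) = -((k : ℚ) * d) := by
    rw [bilin_antisymm B halt, hk]
  have h2 : B f ((d : ℚ) • e + z) = -(d : ℚ) := by simp [hfe, hfz]
  have heq : (d : ℚ) • e + z + B f ((d : ℚ) • e + z) • m + B m ((d : ℚ) • e + z) • f
      = ((d : ℤ) : ℚ) • e + (((d : ℤ) * (-k) : ℤ) : ℚ) • f + z' := by
    rw [h1, h2, hzz]
    push_cast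
    module
  rw [heq] at hr
  have hz'1 : B e z' = 0 := by
    have := hez
    rw [hzz] at this
    simpa [hem] using this
  have hz'2 : B f z' = 0 := by
    have := hfz
    rw [hzz] at this
    simpa [hfm] using this
  have hd0 : (d : ℤ) ≠ 0 := by exact_mod_cast hd.1.ne'
  have hr3 := rel_gcd halt hint he hf hef hz'1 hz'2 (a := d) (b := d * (-k)) (d := d)
    (a' := 1) (b' := -k) (s := 1) (t := 0) hd0 (by ring) rfl (by ring)
  simpa using hr.trans hr3

lemma discCls_eq_iff {B : V →ₗ[ℚ] V →ₗ[ℚ] ℚ} {L : Submodule ℤ V} (x y : dualLattice B L) :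
    discCls B L x = discCls B L y ↔ (x : V) - y ∈ L := by
  unfold discCls
  rw [Submodule.Quotient.eq]
  rfl

/-- For primitive `v`, a rational multiple `(n/d) v` lies in `L` only if `d ∣ n`. -/
lemma prim_dvd {L : Submodule ℤ V} {v : V} (hv : IsPrimitive L v) (hv0 : v ≠ 0) {d : ℕ}
    (hd : 0 < d) {n : ℕ} (h : (n : ℚ) • vstar v d ∈ L) : d ∣ n := by
  have hmem : (n : ℚ) • vstar v d ∈ (Submodule.span ℚ {v}).restrictScalars ℤ ⊓ L := by
    refine ⟨?_, h⟩
    rw [SetLike.mem_coe, Submodule.restrictScalars_mem, Submodule.mem_span_singleton]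
    exact ⟨(n : ℚ) * (d : ℚ)⁻¹, by rw [vstar, smul_smul]⟩
  rw [hv.2, Submodule.mem_span_singleton] at hmem
  obtain ⟨k, hk⟩ := hmem
  rw [← Int.cast_smul_eq_zsmul ℚ, vstar, smul_smul] at hk
  have h1 := smul_left_injective ℚ hv0 hk
  have hdq : (d : ℚ) ≠ 0 := by exact_mod_cast hd.ne'
  have h2 : (n : ℚ) = k * d := by
    have h3 : (k : ℚ) = n * (d : ℚ)⁻¹ := h1
    rw [h3]; field_simp
  have h4 : (n : ℤ) = k * d := by exact_mod_cast h2
  exact Int.natCast_dvd_natCast.1 ⟨k, by rw [h4]; ring⟩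

lemma hasDiv_ne_zero {B : V →ₗ[ℚ] V →ₗ[ℚ] ℚ} {L : Submodule ℤ V} {v : V} {d : ℕ}
    (h : HasDiv B L v d) : v ≠ 0 := by
  rintro rfl
  obtain ⟨x, _, hx⟩ := h.2.2
  have : (d : ℚ) = 0 := by rw [← hx]; simp
  exact h.1.ne' (by exact_mod_cast this)

lemma smul_vstar {v : V} {d : ℕ} (hd : 0 < d) : (d : ℚ) • vstar v d = v := by
  have hdq : (d : ℚ) ≠ 0 := by exact_mod_cast hd.ne'
  rw [vstar, smul_smul, mul_inv_cancel₀ hdq, one_smul]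

lemma nmem {L : Submodule ℤ V} {x : V} (hx : x ∈ L) (n : ℕ) : (n : ℚ) • x ∈ L := by
  simpa using zmem hx (n : ℤ)

lemma dvd_of_cls {L : Submodule ℤ V} {v w : V} {dv dw : ℕ} (hv : v ∈ L)
    (hw : IsPrimitive L w) (hw0 : w ≠ 0) (hdv : 0 < dv) (hdw : 0 < dw)
    (h : vstar v dv - vstar w dw ∈ L) : dw ∣ dv := by
  apply prim_dvd hw hw0 hdw
  have h1 := L.sub_mem hv (nmem h dv)
  rw [smul_sub, smul_vstar hdv] at h1
  simpa using h1

/-- The class of `v*` is invariant under the discriminant kernel. -/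
lemma cls_of_rel {B : V →ₗ[ℚ] V →ₗ[ℚ] ℚ} {L : Submodule ℤ V} {v w : V} {dv dw : ℕ}
    (hdv : HasDiv B L v dv) (hdw : HasDiv B L w dw) (h : Rel B L v w) :
    vstar v dv - vstar w dw ∈ L := by
  have hd := hasDiv_unique (hasDiv_rel h hdv) hdw
  subst hd
  obtain ⟨γ, hγ, rfl⟩ := h
  have h1 := hγ.2 _ (vstar_mem hdv)
  have h2 : γ (vstar v dv) = vstar (γ v) dv := by simp [vstar]
  rw [h2] at h1
  rw [← neg_sub]
  exact L.neg_mem h1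

lemma rel_of_cls {B : V →ₗ[ℚ] V →ₗ[ℚ] ℚ} {L : Submodule ℤ V}
    (halt : ∀ v, B v v = 0)
    (hint : ∀ x ∈ L, ∀ y ∈ L, ∃ n : ℤ, B x y = (n : ℚ))
    {e f : V} (he : e ∈ L) (hf : f ∈ L) (hef : B e f = 1)
    {v w : V} {dv dw : ℕ} (hv : IsPrimitive L v) (hw : IsPrimitive L w)
    (hdv : HasDiv B L v dv) (hdw : HasDiv B L w dw)
    (h : vstar v dv - vstar w dw ∈ L) : Rel B L v w := by
  have h' : vstar w dw - vstar v dv ∈ L := by rw [← neg_sub]; exact L.neg_mem h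
  have hd : dv = dw := Nat.dvd_antisymm
    (dvd_of_cls hw.1 hv (hasDiv_ne_zero hdv) hdw.1 hdv.1 h')
    (dvd_of_cls hv.1 hw (hasDiv_ne_zero hdw) hdv.1 hdw.1 h)
  subst hd
  obtain ⟨z, hz, hez, hfz, hr⟩ := rel_normal halt hint he hf hef hv.1 hdv
  obtain ⟨z', hz', hez', hfz', hr'⟩ := rel_normal halt hint he hf hef hw.1 hdw
  have hd1 := hasDiv_rel hr hdv
  have hd2 := hasDiv_rel hr' hdw
  have c1 := cls_of_rel hdv hd1 hr
  have c2 := cls_of_rel hdw hd2 hr'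
  have hdq : (dv : ℚ) ≠ 0 := by exact_mod_cast hdv.1.ne'
  have hmL : ((dv : ℚ))⁻¹ • (z - z') ∈ L := by
    have := L.add_mem (L.sub_mem h c1) c2
    convert this using 1
    simp only [vstar]
    module
  have hr2 := rel_normal_normal halt hint he hf hef hez hfz hmL
    (by simp [hez, hez']) (by simp [hfz, hfz'])
    (z' := z') (by rw [smul_smul, mul_inv_cancel₀ hdq, one_smul]; abel) hd1
  exact hr.trans (hr2.trans hr'.symm)

lemma exists_mult {L : Submodule ℤ V} (hspan : Submodule.span ℚ (L : Set V) = ⊤) (u : V) :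
    ∃ n : ℕ, 0 < n ∧ (n : ℚ) • u ∈ L := by
  have hu : u ∈ Submodule.span ℚ (L : Set V) := by rw [hspan]; trivial
  induction hu using Submodule.span_induction with
  | mem x hx => exact ⟨1, one_pos, by simpa using hx⟩
  | zero => exact ⟨1, one_pos, by simp⟩
  | add x y _ _ hx hy =>
    obtain ⟨n, hn, hnx⟩ := hx
    obtain ⟨m, hm, hmy⟩ := hy
    refine ⟨n * m, Nat.mul_pos hn hm, ?_⟩
    have := L.add_mem (nmem hnx m) (nmem hmy n)
    convert this using 1
    push_cast
    module
  | smul q x _ hx =>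
    obtain ⟨n, hn, hnx⟩ := hx
    refine ⟨q.den * n, Nat.mul_pos q.den_pos hn, ?_⟩
    have := zmem hnx q.num
    convert this using 1
    rw [smul_smul, smul_smul]
    congr 1
    push_cast
    rw [← Rat.mul_den_eq_num q]
    ring

lemma exists_order {L : Submodule ℤ V} (hspan : Submodule.span ℚ (L : Set V) = ⊤) (u : V) :
    ∃ d : ℕ, 0 < d ∧ (d : ℚ) • u ∈ L ∧ ∀ n : ℤ, (n : ℚ) • u ∈ L → (d : ℤ) ∣ n := by
  classical
  have hex := exists_mult hspan u
  obtain ⟨h0, h1⟩ := Nat.find_spec hex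
  refine ⟨Nat.find hex, h0, h1, fun n hn => ?_⟩
  set d := Nat.find hex with hd
  have hd0 : (0 : ℤ) < d := by exact_mod_cast h0
  have hr0 := Int.emod_nonneg n hd0.ne'
  have hrd := Int.emod_lt_of_pos n hd0
  rw [Int.dvd_iff_emod_eq_zero]
  by_contra hne
  obtain ⟨r, hr⟩ := Int.eq_ofNat_of_zero_le hr0
  have hrpos : 0 < r := by omega
  have hrlt : r < d := by omega
  refine Nat.find_min hex hrlt ⟨hrpos, ?_⟩
  have h2 : ((r : ℤ) : ℚ) = n - d * ((n / d : ℤ) : ℚ) := by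
    have := Int.emod_add_mul_ediv n d
    rw [hr] at this
    have h3 : (r : ℤ) = n - d * (n / d) := by linarith
    exact_mod_cast h3
  have h3 := L.sub_mem hn (zmem h1 (n / d))
  convert h3 using 1
  rw [smul_smul, ← sub_smul]
  congr 1
  rw [Int.cast_natCast] at h2
  rw [h2]
  ring

lemma surj {B : V →ₗ[ℚ] V →ₗ[ℚ] ℚ} {L : Submodule ℤ V}
    (halt : ∀ v, B v v = 0)
    (hint : ∀ x ∈ L, ∀ y ∈ L, ∃ n : ℤ, B x y = (n : ℚ))
    (hspan : Submodule.span ℚ (L : Set V) = ⊤)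
    {e f : V} (he : e ∈ L) (hf : f ∈ L) (hef : B e f = 1)
    {u : V} (hu : u ∈ dualLattice B L) :
    ∃ (v : V) (d : ℕ), IsPrimitive L v ∧ HasDiv B L v d ∧ vstar v d - u ∈ L := by
  have hfe : B f e = -1 := by rw [bilin_antisymm B halt, hef]
  obtain ⟨a, ha⟩ := hu e he
  obtain ⟨b, hb⟩ := hu f hf
  -- `y` is congruent to `u` and orthogonal to `f`
  set y := u - (b : ℚ) • e with hy
  have hyf : B y f = 0 := by simp [hy, hb, hef]
  have hle : L ≤ dualLattice B L := fun x hx y hy => hint x hx y hy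
  have hyD : y ∈ dualLattice B L := Submodule.sub_mem _ hu (hle (zmem he _))
  have hsD : e + y ∈ dualLattice B L := Submodule.add_mem _ (hle he) hyD
  obtain ⟨d, hd, hdy, hmin⟩ := exists_order hspan y
  have hdq : (d : ℚ) ≠ 0 := by exact_mod_cast hd.ne'
  have hvs : vstar ((d : ℚ) • (e + y)) d = e + y := by
    rw [vstar, smul_smul, inv_mul_cancel₀ hdq, one_smul]
  have hvL : (d : ℚ) • (e + y) ∈ L := by
    rw [smul_add]; exact L.add_mem (nmem he d) hdy
  refine ⟨(d : ℚ) • (e + y), d, ⟨hvL, ?_⟩, ⟨hd, ?_, f, hf, ?_⟩, ?_⟩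
  · apply le_antisymm
    · rintro x ⟨hx1, hx2⟩
      rw [SetLike.mem_coe, Submodule.restrictScalars_mem, Submodule.mem_span_singleton] at hx1
      obtain ⟨q, rfl⟩ := hx1
      obtain ⟨n, hn⟩ := hint _ hx2 f hf
      have hqd : q * d = n := by simpa [hef, hyf] using hn
      have hny : (n : ℚ) • y ∈ L := by
        have := L.sub_mem hx2 (zmem he n)
        convert this using 1
        rw [← hqd]
        module
      obtain ⟨k, hk⟩ := hmin n hny
      have hk' : (n : ℚ) = d * k := by exact_mod_cast hk
      have hqk : q = k := by
        apply mul_right_cancel₀ hdq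
        rw [hqd, hk']; ring
      rw [Submodule.mem_span_singleton]
      exact ⟨k, by rw [← Int.cast_smul_eq_zsmul ℚ, hqk]⟩
    · rw [Submodule.span_singleton_le_iff_mem]
      exact ⟨Submodule.mem_span_singleton_self _, hvL⟩
  · intro x hx
    obtain ⟨n, hn⟩ := hsD x hx
    exact ⟨n, by rw [map_smul, LinearMap.smul_apply, hn, smul_eq_mul]; ring⟩
  · simp [hef, hyf]
  · rw [hvs, hy]
    have := L.sub_mem he (zmem he b)
    convert this using 1
    abel

end EichlerAux

/-- **Type `(1, p, …, p)`.** For `Λ = U ⊕ U(p) ⊕ ⋯ ⊕ U(p)` with `p` prime, the map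
`v ↦ [v*]` induces a bijection from `Γ_Λ`-classes of primitive vectors onto `D_Λ`. -/
theorem eichler_criterion_type_one_p_p
    (V : Type) [AddCommGroup V] [Module ℚ V]
    (B : V →ₗ[ℚ] V →ₗ[ℚ] ℚ)
    (halt : ∀ v, B v v = 0)
    (hnd : ∀ v : V, (∀ w, B v w = 0) → v = 0)
    (L : Submodule ℤ V) (hfg : L.FG)
    (hspan : Submodule.span ℚ (L : Set V) = ⊤)
    (hint : ∀ x ∈ L, ∀ y ∈ L, ∃ n : ℤ, B x y = (n : ℚ))
    (p : ℕ) (hp : p.Prime) (ι : Type) [Fintype ι]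
    (e f : V) (E F : ι → V)
    (hdec : OrthoDecompUUp B L p e f E F) :
    (∀ (v w : V) (dv dw : ℕ) (hv : IsPrimitive L v) (hw : IsPrimitive L w)
        (hdv : HasDiv B L v dv) (hdw : HasDiv B L w dw),
        (∃ γ : V ≃ₗ[ℚ] V, InGamma B L γ ∧ γ v = w) ↔
          discCls B L ⟨vstar v dv, vstar_mem hdv⟩ =
            discCls B L ⟨vstar w dw, vstar_mem hdw⟩) ∧
    (∀ x : DiscGroup B L, ∃ (v : V) (d : ℕ) (hv : IsPrimitive L v) (hd : HasDiv B L v d),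
        discCls B L ⟨vstar v d, vstar_mem hd⟩ = x) := by
  obtain ⟨he, hf, -, -, hef, -⟩ := hdec
  refine ⟨fun v w dv dw hv hw hdv hdw => ?_, fun x => ?_⟩
  · rw [EichlerAux.discCls_eq_iff]
    exact ⟨fun h => EichlerAux.cls_of_rel hdv hdw h,
      fun h => EichlerAux.rel_of_cls halt hint he hf hef hv hw hdv hdw h⟩
  · obtain ⟨u, rfl⟩ := Submodule.Quotient.mk_surjective _ x
    obtain ⟨v, d, hv, hd, h⟩ := EichlerAux.surj halt hint hspan he hf hef u.2
    exact ⟨v, d, hv, hd, (EichlerAux.discCls_eq_iff _ u).2 h⟩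
end

section
/- Let p be a prime and let Λ = U ⊕ U(p) ⊕ ⋯ ⊕ U(p) (one copy of U and g−1 copies of U(p), orthogonal direct sum). If v ∈ Λ is a primitive vector with div(v) = 1, then v is Γ_Λ-equivalent to a vector lying in the U component. -/
/-- Two lattice vectors with pairing `1` are related by one transvection in `Γ_Λ`. -/
theorem gamma_of_pair_one {V : Type} [AddCommGroup V] [Module ℚ V]
    (B : V →ₗ[ℚ] V →ₗ[ℚ] ℚ) (halt : ∀ v, B v v = 0) (L : Submodule ℤ V)
    (hint : ∀ x ∈ L, ∀ y ∈ L, ∃ n : ℤ, B x y = (n : ℚ))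
    (v v' : V) (hv : v ∈ L) (hv' : v' ∈ L) (h : B v v' = 1) :
    ∃ γ : V ≃ₗ[ℚ] V, InGamma B L γ ∧ γ v = v' := by
  have hanti := bilin_antisymm B halt
  obtain ⟨w, hw⟩ : ∃ w, w = v' - v := ⟨_, rfl⟩
  have hwL : w ∈ L := hw ▸ L.sub_mem hv' hv
  let γ : V ≃ₗ[ℚ] V := LinearEquiv.ofLinear
    (LinearMap.id - (B w).smulRight w) (LinearMap.id + (B w).smulRight w)
    (by ext x; simp [halt]) (by ext x; simp [halt])
  have hγ : ∀ x, γ x = x - B w x • w := fun x => rfl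
  have hmem : ∀ x, (∃ n : ℤ, B w x = n) → B w x • w ∈ L := by
    rintro x ⟨n, hn⟩
    rw [hn, Int.cast_smul_eq_zsmul]
    exact L.smul_mem n hwL
  refine ⟨γ, ⟨⟨fun x => ⟨fun hx => ?_, fun hx => ?_⟩, fun x y => ?_⟩, fun x hx => ?_⟩, ?_⟩
  · rw [hγ]
    exact L.sub_mem hx (hmem x (hint w hwL x hx))
  · have h1 : B w (γ x) = B w x := by simp [hγ, halt]
    have h2 : x = γ x + B w x • w := by rw [hγ]; abel
    rw [h2]
    exact L.add_mem hx (hmem x (h1 ▸ hint w hwL _ hx))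
  · simp only [hγ, map_sub, LinearMap.sub_apply, map_smul, LinearMap.smul_apply, smul_eq_mul, halt]
    rw [hanti x w]; ring
  · have : γ x - x = -(B w x • w) := by rw [hγ]; abel
    rw [this]
    refine L.neg_mem (hmem x ?_)
    obtain ⟨n, hn⟩ := hx w hwL
    exact ⟨-n, by rw [hanti, hn]; push_cast; rfl⟩
  · have : B w v = -1 := by
      rw [hw, map_sub, LinearMap.sub_apply, halt, hanti, h]; norm_num
    rw [hγ, this, hw]
    simp

theorem inGamma_trans {V : Type} [AddCommGroup V] [Module ℚ V]
    {B : V →ₗ[ℚ] V →ₗ[ℚ] ℚ} {L : Submodule ℤ V} {γ δ : V ≃ₗ[ℚ] V}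
    (hγ : InGamma B L γ) (hδ : InGamma B L δ) : InGamma B L (γ.trans δ) := by
  refine ⟨⟨fun x => ?_, fun x y => ?_⟩, fun x hx => ?_⟩
  · rw [LinearEquiv.trans_apply, ← hδ.1.1, ← hγ.1.1]
  · rw [LinearEquiv.trans_apply, LinearEquiv.trans_apply, hδ.1.2, hγ.1.2]
  · have h := L.add_mem (hδ.2 _ (isometry_dual_mem hγ.1 hx)) (hγ.2 x hx)
    rwa [sub_add_sub_cancel] at h

theorem bezout_pair (a b : ℤ) :
    ∃ d a' b' r s : ℤ, a = d * a' ∧ b = d * b' ∧ a' * r - b' * s = 1 := by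
  by_cases h : a = 0 ∧ b = 0
  · exact ⟨0, 1, 0, 1, 0, by simp [h.1], by simp [h.2], by norm_num⟩
  · have hg : (Int.gcd a b : ℤ) ≠ 0 := by
      intro h0
      exact h (Int.gcd_eq_zero_iff.mp (by exact_mod_cast h0))
    obtain ⟨a', ha⟩ := Int.gcd_dvd_left a b
    obtain ⟨b', hb⟩ := Int.gcd_dvd_right a b
    refine ⟨Int.gcd a b, a', b', Int.gcdA a b, -Int.gcdB a b, ha, hb, ?_⟩
    have := Int.gcd_eq_gcd_ab a b
    apply mul_left_cancel₀ hg
    linear_combination (-1 : ℤ) * this - Int.gcdA a b * ha - Int.gcdB a b * hb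

/-- For `Λ = U ⊕ U(p) ⊕ ⋯ ⊕ U(p)` with `p` prime, a primitive vector with
`div(v) = 1` is `Γ_Λ`-equivalent to a vector of the `U` component. -/
theorem short_vector_into_U
    (V : Type) [AddCommGroup V] [Module ℚ V]
    (B : V →ₗ[ℚ] V →ₗ[ℚ] ℚ)
    (halt : ∀ v, B v v = 0)
    (hnd : ∀ v : V, (∀ w, B v w = 0) → v = 0)
    (L : Submodule ℤ V) (hfg : L.FG)
    (hspan : Submodule.span ℚ (L : Set V) = ⊤)
    (hint : ∀ x ∈ L, ∀ y ∈ L, ∃ n : ℤ, B x y = (n : ℚ))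
    (p : ℕ) (hp : p.Prime) (ι : Type) [Fintype ι]
    (e f : V) (E F : ι → V)
    (hdec : OrthoDecompUUp B L p e f E F)
    (v : V) (hv : IsPrimitive L v) (hdiv : HasDiv B L v 1) :
    ∃ γ : V ≃ₗ[ℚ] V, InGamma B L γ ∧ γ v ∈ Submodule.span ℤ {e, f} := by
  obtain ⟨he, hf, -, -, hef, -⟩ := hdec
  have hanti := bilin_antisymm B halt
  have hvL := hv.1
  obtain ⟨-, -, x, hx, hvx⟩ := hdiv
  obtain ⟨a, ha⟩ := hint v hvL f hf
  obtain ⟨b, hb⟩ := hint e he v hvL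
  obtain ⟨c, hc⟩ := hint x hx f hf
  obtain ⟨d, hd⟩ := hint e he x hx
  have hve : B v e = -b := by rw [hanti, hb]
  have hxe : B x e = -d := by rw [hanti, hd]
  have hfe : B f e = -1 := by rw [hanti, hef]
  obtain ⟨k, a', b', r, s, hak, hbk, hrs⟩ := bezout_pair a b
  have hakq : (a : ℚ) = k * a' := by exact_mod_cast hak
  have hbkq : (b : ℚ) = k * b' := by exact_mod_cast hbk
  have hrsq : (a' : ℚ) * r - b' * s = 1 := by exact_mod_cast hrs
  obtain ⟨t, ht⟩ : ∃ t : ℤ, t = a' * d - b' * c := ⟨_, rfl⟩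
  have htq : (t : ℚ) = a' * d - b' * c := by exact_mod_cast ht
  obtain ⟨u, hu⟩ : ∃ u : V, u = (s : ℚ) • e + (r : ℚ) • f := ⟨_, rfl⟩
  obtain ⟨w, hw⟩ : ∃ w : V, w = x + ((a' : ℚ) • e + (b' : ℚ) • f) + (t : ℚ) • u
      - ((c : ℚ) • e + (d : ℚ) • f) := ⟨_, rfl⟩
  have hsm : ∀ (n : ℤ) (y : V), y ∈ L → (n : ℚ) • y ∈ L := by
    intro n y hy
    rw [Int.cast_smul_eq_zsmul]
    exact L.smul_mem n hy
  have huL : u ∈ L := hu ▸ L.add_mem (hsm _ _ he) (hsm _ _ hf)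
  have hwL : w ∈ L := by
    rw [hw]
    exact L.sub_mem (L.add_mem (L.add_mem hx (L.add_mem (hsm _ _ he) (hsm _ _ hf)))
      (hsm _ _ huL)) (L.add_mem (hsm _ _ he) (hsm _ _ hf))
  have hvw : B v w = 1 := by
    rw [hw, hu]
    simp only [map_add, map_sub, map_smul, smul_eq_mul, hvx, hve, ha, hakq, hbkq, htq]
    push_cast
    linear_combination (k * (a' * d - b' * c) : ℚ) * hrsq
  have hwu : B w u = 1 := by
    rw [hw, hu]
    simp only [map_add, map_sub, map_smul, smul_eq_mul, LinearMap.add_apply, LinearMap.sub_apply,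
      LinearMap.smul_apply, halt, hef, hfe, hxe, hc]
    linear_combination hrsq
  obtain ⟨γ, hγ, hγv⟩ := gamma_of_pair_one B halt L hint v w hvL hwL hvw
  obtain ⟨δ, hδ, hδw⟩ := gamma_of_pair_one B halt L hint w u hwL huL hwu
  refine ⟨γ.trans δ, inGamma_trans hγ hδ, ?_⟩
  rw [LinearEquiv.trans_apply, hγv, hδw, Submodule.mem_span_pair]
  exact ⟨s, r, by rw [hu, Int.cast_smul_eq_zsmul, Int.cast_smul_eq_zsmul]⟩
end

section
/- Let p be a prime and let Λ = U ⊕ U(p) ⊕ ⋯ ⊕ U(p) (one copy of U and g−1 copies of U(p), orthogonal direct sum). If v ∈ Λ is a primitive vector with div(v) = p, then v is Γ_Λ-equivalent to a vector lying in the sublattice U(p) ⊕ ⋯ ⊕ U(p). -/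
section LongVectorHelpers

variable {V : Type} [AddCommGroup V] [Module ℚ V]

/-- Equivalence of vectors under the group `Γ_Λ`. -/
def GammaRel (B : V →ₗ[ℚ] V →ₗ[ℚ] ℚ) (L : Submodule ℤ V) (v w : V) : Prop :=
  ∃ γ : V ≃ₗ[ℚ] V, InGamma B L γ ∧ γ v = w

lemma GammaRel.refl (B : V →ₗ[ℚ] V →ₗ[ℚ] ℚ) (L : Submodule ℤ V) (v : V) :
    GammaRel B L v v :=
  ⟨LinearEquiv.refl ℚ V, ⟨⟨fun _ => Iff.rfl, fun _ _ => rfl⟩, fun v _ => by simp⟩, rfl⟩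

lemma GammaRel.trans {B : V →ₗ[ℚ] V →ₗ[ℚ] ℚ} {L : Submodule ℤ V} {u v w : V}
    (h₁ : GammaRel B L u v) (h₂ : GammaRel B L v w) : GammaRel B L u w := by
  obtain ⟨γ₁, g₁, rfl⟩ := h₁
  obtain ⟨γ₂, g₂, rfl⟩ := h₂
  refine ⟨γ₁.trans γ₂, ⟨⟨fun x => ?_, fun x y => ?_⟩, fun x hx => ?_⟩, rfl⟩
  · rw [g₁.1.1 x, g₂.1.1 (γ₁ x)]; rfl
  · rw [← g₁.1.2 x y, ← g₂.1.2 (γ₁ x) (γ₁ y)]; rfl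
  · have h1 := g₁.2 x hx
    have h2 := g₂.2 (γ₁ x) (isometry_dual_mem g₁.1 hx)
    have h3 := L.add_mem h2 h1
    simpa using h3

lemma cast_smul_mem (L : Submodule ℤ V) (n : ℤ) {x : V} (hx : x ∈ L) :
    (n : ℚ) • x ∈ L := by
  rw [Int.cast_smul_eq_zsmul]; exact L.smul_mem n hx

lemma transv_rel {B : V →ₗ[ℚ] V →ₗ[ℚ] ℚ} {L : Submodule ℤ V} (halt : ∀ v, B v v = 0)
    (hint : ∀ x ∈ L, ∀ y ∈ L, ∃ n : ℤ, B x y = (n : ℚ))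
    {l : V} (hl : l ∈ L) (c : ℤ) (v : V) :
    GammaRel B L v (v + ((c : ℚ) * B l v) • l) := by
  have key : ∀ (c : ℤ) (u : V), u ∈ dualLattice B L → ((c : ℚ) * B l u) • l ∈ L := by
    intro c u hu
    obtain ⟨n, hn⟩ := hu l hl
    have : (c : ℚ) * B l u = ((-(c * n) : ℤ) : ℚ) := by
      rw [bilin_antisymm B halt, hn]; push_cast; ring
    rw [this]
    exact cast_smul_mem L _ hl
  have hLd : ∀ u ∈ L, u ∈ dualLattice B L := fun u hu x hx => hint u hu x hx
  let T : ℚ → V →ₗ[ℚ] V := fun c => LinearMap.id + (c • B l).smulRight l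
  have hT : ∀ c u, T c u = u + (c * B l u) • l := fun c u => by simp [T]
  have hTT : ∀ c u, T c (T (-c) u) = u := by
    intro c u
    rw [hT, hT]
    simp only [map_add, map_smul, halt, smul_eq_mul]
    module
  let γ : V ≃ₗ[ℚ] V := LinearEquiv.ofLinear (T c) (T (-c))
    (LinearMap.ext fun u => hTT c u)
    (LinearMap.ext fun u => by simpa using hTT (-c : ℚ) u)
  have hγ : ∀ u, γ u = u + ((c : ℚ) * B l u) • l := fun u => hT c u
  refine ⟨γ, ⟨⟨fun u => ⟨fun hu => ?_, fun hu => ?_⟩, fun x y => ?_⟩, fun u hu => ?_⟩, hγ v⟩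
  · rw [hγ]; exact L.add_mem hu (key c u (hLd u hu))
  · have h1 : u = γ u + (((-c : ℤ) : ℚ) * B l (γ u)) • l := by
      rw [hγ]
      simp only [map_add, map_smul, halt, smul_eq_mul]
      push_cast
      module
    rw [h1]
    exact L.add_mem hu (key (-c) _ (hLd _ hu))
  · rw [hγ, hγ]
    simp only [map_add, map_smul, halt, smul_eq_mul, LinearMap.add_apply, LinearMap.smul_apply]
    rw [bilin_antisymm B halt x l]; ring
  · rw [hγ, add_sub_cancel_left]; exact key c u hu

lemma transv2_rel {B : V →ₗ[ℚ] V →ₗ[ℚ] ℚ} {L : Submodule ℤ V} (halt : ∀ v, B v v = 0)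
    (hint : ∀ x ∈ L, ∀ y ∈ L, ∃ n : ℤ, B x y = (n : ℚ))
    {l m : V} (hl : l ∈ L) (hm : m ∈ L) (hlm : B l m = 0) (v : V) :
    GammaRel B L v (v + B l v • m + B m v • l) := by
  have hml : B m l = 0 := by rw [bilin_antisymm B halt, hlm, neg_zero]
  have h1 := transv_rel halt hint hm (-1) v
  have h2 := transv_rel halt hint hl (-1) (v + (((-1 : ℤ) : ℚ) * B m v) • m)
  have h3 := transv_rel halt hint (L.add_mem hl hm) 1
    (v + (((-1 : ℤ) : ℚ) * B m v) • m +
      (((-1 : ℤ) : ℚ) * B l (v + (((-1 : ℤ) : ℚ) * B m v) • m)) • l)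
  have h := (h1.trans h2).trans h3
  convert h using 1
  simp only [map_add, map_smul, halt, smul_eq_mul, LinearMap.add_apply, hlm, hml]
  push_cast
  module

/-- The Euclidean algorithm on the hyperbolic plane `U`. -/
lemma euclid_rel {B : V →ₗ[ℚ] V →ₗ[ℚ] ℚ} {L : Submodule ℤ V} (halt : ∀ v, B v v = 0)
    (hint : ∀ x ∈ L, ∀ y ∈ L, ∃ n : ℤ, B x y = (n : ℚ))
    {e f w : V} (he : e ∈ L) (hf : f ∈ L) (hef : B e f = 1) (hew : B e w = 0)
    (hfw : B f w = 0) (n : ℕ) :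
    ∀ a b : ℤ, b.natAbs ≤ n → ∃ d : ℤ, d ∣ a ∧ d ∣ b ∧ (∃ s t : ℤ, d = s * a + t * b) ∧
      GammaRel B L ((a : ℚ) • e + (b : ℚ) • f + w) ((d : ℚ) • e + w) := by
  have hfe : B f e = -1 := by rw [bilin_antisymm B halt, hef]
  induction n with
  | zero =>
    intro a b hb
    have hb0 : b = 0 := by omega
    subst hb0
    refine ⟨a, dvd_rfl, dvd_zero a, ⟨1, 0, by ring⟩, ?_⟩
    have := GammaRel.refl B L ((a : ℚ) • e + w)
    simpa using this
  | succ n ih =>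
    intro a b hb
    by_cases hb0 : b = 0
    · exact ih a b (by simp [hb0])
    have hr0 := Int.emod_nonneg a hb0
    have hr1 := Int.emod_lt_abs a hb0
    have hdm := Int.mul_ediv_add_emod a b
    obtain ⟨d, hd1, hd2, ⟨s, t, hst⟩, hR⟩ := ih (b + a % b) (-(a % b)) (by
      rw [Int.abs_eq_natAbs] at hr1; omega)
    have hdr : d ∣ a % b := (dvd_neg).1 hd2
    have hdb : d ∣ b := (Int.dvd_add_left hdr).1 hd1
    refine ⟨d, ?_, hdb, ⟨s - t, s - (s - t) * (a / b), ?_⟩, ?_⟩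
    · rw [← hdm]; exact dvd_add (hdb.mul_right _) hdr
    · rw [hst]
      have : a % b = a - b * (a / b) := by linarith
      rw [this]; ring
    · have h1 := transv_rel halt hint he (1 - a / b) ((a : ℚ) • e + (b : ℚ) • f + w)
      have e1 : (a : ℚ) • e + (b : ℚ) • f + w +
          (((1 - a / b : ℤ) : ℚ) * B e ((a : ℚ) • e + (b : ℚ) • f + w)) • e
          = ((b + a % b : ℤ) : ℚ) • e + (b : ℚ) • f + w := by
        have : a % b = a - b * (a / b) := by linarith
        rw [this]
        simp only [map_add, map_smul, halt, smul_eq_mul, hef, hew]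
        push_cast
        module
      rw [e1] at h1
      have h2 := transv_rel halt hint hf 1 (((b + a % b : ℤ) : ℚ) • e + (b : ℚ) • f + w)
      have e2 : ((b + a % b : ℤ) : ℚ) • e + (b : ℚ) • f + w +
          (((1 : ℤ) : ℚ) * B f (((b + a % b : ℤ) : ℚ) • e + (b : ℚ) • f + w)) • f
          = ((b + a % b : ℤ) : ℚ) • e + ((-(a % b) : ℤ) : ℚ) • f + w := by
        simp only [map_add, map_smul, halt, smul_eq_mul, hfe, hfw]
        push_cast
        module
      rw [e2] at h2
      exact (h1.trans h2).trans hR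

lemma not_div_of_rel {B : V →ₗ[ℚ] V →ₗ[ℚ] ℚ} {L : Submodule ℤ V} {v w : V}
    (h : GammaRel B L v w) (q : ℚ) (hv : q • v ∉ L) : q • w ∉ L := by
  obtain ⟨γ, hγ, rfl⟩ := h
  rw [← map_smul, ← hγ.1.1]
  exact hv

/-- The last step: killing the `U`-component. -/
lemma final_rel {B : V →ₗ[ℚ] V →ₗ[ℚ] ℚ} {L N : Submodule ℤ V} (halt : ∀ v, B v v = 0)
    (hint : ∀ x ∈ L, ∀ y ∈ L, ∃ n : ℤ, B x y = (n : ℚ))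
    (hNL : N ≤ L) {e f w g h : V} (he : e ∈ L) (hf : f ∈ L) (hef : B e f = 1)
    (heN : ∀ z ∈ N, B e z = 0) (hfN : ∀ z ∈ N, B f z = 0)
    (hw : w ∈ N) (hg : g ∈ N) (hh : h ∈ N)
    (p : ℕ) (hp : p.Prime) (c : ℤ) (hgh : B g h = (p : ℚ) * c) (hc : IsUnit c)
    (x y : ℤ) (hx : ¬ (p : ℤ) ∣ x)
    (hwh : B w h = (p : ℚ) * x) (hwg : B w g = (p : ℚ) * y) :
    ∃ z ∈ N, GammaRel B L ((p : ℚ) • e + w) z := by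
  have hfe : B f e = -1 := by rw [bilin_antisymm B halt, hef]
  have hcop : IsCoprime (p : ℤ) x :=
    (Nat.prime_iff_prime_int.1 hp).coprime_iff_not_dvd.2 hx
  have hcc : c * c = 1 := by
    rcases Int.isUnit_iff.1 hc with rfl | rfl <;> norm_num
  -- choose `k` with `y + p k = 1 mod x`
  obtain ⟨u, u', huu⟩ := hcop
  obtain ⟨k, α, β, hk⟩ : ∃ k α β : ℤ, α * x + β * (y + p * k) = 1 :=
    ⟨u * (1 - y), u' * (1 - y), 1, by linear_combination (1 - y) * huu⟩
  have hhg : B h g = -((p : ℚ) * c) := by rw [bilin_antisymm B halt, hgh]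
  have hhw : B h w = -((p : ℚ) * x) := by rw [bilin_antisymm B halt, hwh]
  have hgw : B g w = -((p : ℚ) * y) := by rw [bilin_antisymm B halt, hwg]
  have hhe : B h e = 0 := by rw [bilin_antisymm B halt, heN h hh, neg_zero]
  have hge : B g e = 0 := by rw [bilin_antisymm B halt, heN g hg, neg_zero]
  have hgf : B g f = 0 := by rw [bilin_antisymm B halt, hfN g hg, neg_zero]
  have hhf : B h f = 0 := by rw [bilin_antisymm B halt, hfN h hh, neg_zero]
  -- first move : change `w` to `w - p j h`
  set j : ℤ := c * k with hj
  have hm1 : (j : ℚ) • h ∈ N := cast_smul_mem N _ hh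
  have r1 := transv2_rel halt hint hf (hNL hm1) (hfN _ hm1) ((p : ℚ) • e + w)
  have e1 : (p : ℚ) • e + w + B f ((p : ℚ) • e + w) • ((j : ℚ) • h)
      + B ((j : ℚ) • h) ((p : ℚ) • e + w) • f
      = (p : ℚ) • e + (-(j * p * x) : ℚ) • f + (w - (p * j : ℚ) • h) := by
    simp only [map_add, map_smul, LinearMap.smul_apply, smul_eq_mul, hfe, hfN w hw, hhe, hhw]
    module
  rw [e1] at r1
  -- second move : kill the `f` coefficient
  have r2 := transv_rel halt hint hf (-(j * x))
    ((p : ℚ) • e + (-(j * p * x) : ℚ) • f + (w - (p * j : ℚ) • h))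
  have e2 : (p : ℚ) • e + (-(j * p * x) : ℚ) • f + (w - (p * j : ℚ) • h)
      + (((-(j * x) : ℤ) : ℚ) *
        B f ((p : ℚ) • e + (-(j * p * x) : ℚ) • f + (w - (p * j : ℚ) • h))) • f
      = (p : ℚ) • e + (w - (p * j : ℚ) • h) := by
    simp only [map_add, map_sub, map_smul, smul_eq_mul, hfe, hfN w hw, hfN h hh, halt]
    push_cast
    module
  rw [e2] at r2
  have hw2 : w - (p * j : ℚ) • h ∈ N := by
    have := cast_smul_mem N (p * j) hh
    push_cast at this
    exact N.sub_mem hw this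
  -- third move : kill the `e` coefficient
  have hm3 : (α : ℚ) • h + (β : ℚ) • g ∈ N :=
    N.add_mem (cast_smul_mem N _ hh) (cast_smul_mem N _ hg)
  have r3 := transv2_rel halt hint he (hNL hm3) (heN _ hm3)
    ((p : ℚ) • e + (w - (p * j : ℚ) • h))
  have hkQ : (α : ℚ) * x + β * (y + p * k) = 1 := by exact_mod_cast hk
  have hccQ : (c : ℚ) * c = 1 := by exact_mod_cast hcc
  have e3 : (p : ℚ) • e + (w - (p * j : ℚ) • h)
      + B e ((p : ℚ) • e + (w - (p * j : ℚ) • h)) • ((α : ℚ) • h + (β : ℚ) • g)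
      + B ((α : ℚ) • h + (β : ℚ) • g) ((p : ℚ) • e + (w - (p * j : ℚ) • h)) • e
      = w - (p * j : ℚ) • h := by
    have hB1 : B e ((p : ℚ) • e + (w - (p * j : ℚ) • h)) = 0 := by
      simp only [map_add, map_sub, map_smul, smul_eq_mul, heN w hw, heN h hh, halt]
      ring
    have hB2 : B ((α : ℚ) • h + (β : ℚ) • g) ((p : ℚ) • e + (w - (p * j : ℚ) • h))
        = -(p : ℚ) := by
      simp only [map_add, map_sub, map_smul, smul_eq_mul, LinearMap.add_apply,
        LinearMap.smul_apply, halt, hhe, hge, hhw, hgw, hgh, hj]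
      push_cast
      linear_combination (-(p : ℚ)) * hkQ - β * p * p * k * hccQ
    rw [hB1, hB2]
    module
  rw [e3] at r3
  exact ⟨_, hw2, (r1.trans r2).trans r3⟩

end LongVectorHelpers

/-- For `Λ = U ⊕ U(p) ⊕ ⋯ ⊕ U(p)` with `p` prime, a primitive vector with
`div(v) = p` is `Γ_Λ`-equivalent to a vector of the sublattice `U(p) ⊕ ⋯ ⊕ U(p)`. -/
theorem long_vector_into_Up_part
    (V : Type) [AddCommGroup V] [Module ℚ V]
    (B : V →ₗ[ℚ] V →ₗ[ℚ] ℚ)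
    (halt : ∀ v, B v v = 0)
    (hnd : ∀ v : V, (∀ w, B v w = 0) → v = 0)
    (L : Submodule ℤ V) (hfg : L.FG)
    (hspan : Submodule.span ℚ (L : Set V) = ⊤)
    (hint : ∀ x ∈ L, ∀ y ∈ L, ∃ n : ℤ, B x y = (n : ℚ))
    (p : ℕ) (hp : p.Prime) (ι : Type) [Fintype ι]
    (e f : V) (E F : ι → V)
    (hdec : OrthoDecompUUp B L p e f E F)
    (v : V) (hv : IsPrimitive L v) (hdiv : HasDiv B L v p) :
    ∃ γ : V ≃ₗ[ℚ] V, InGamma B L γ ∧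
      γ v ∈ Submodule.span ℤ (Set.range E ∪ Set.range F) := by
  obtain ⟨he, hf, hE, hF, hef, hEF, horth, hij, hL⟩ := hdec
  have hp0 : (p : ℚ) ≠ 0 := Nat.cast_ne_zero.mpr hp.ne_zero
  have hfe : B f e = -1 := by rw [bilin_antisymm B halt, hef]
  set N : Submodule ℤ V := Submodule.span ℤ (Set.range E ∪ Set.range F) with hN
  have hNL : N ≤ L := by
    refine Submodule.span_le.2 ?_
    rintro _ (⟨i, rfl⟩ | ⟨i, rfl⟩)
    exacts [hE i, hF i]
  have hefN : ∀ z ∈ N, B e z = 0 ∧ B f z = 0 := by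
    intro z hz
    induction hz using Submodule.span_induction with
    | mem x hx =>
      rcases hx with ⟨i, rfl⟩ | ⟨i, rfl⟩
      exacts [⟨(horth i).1, (horth i).2.2.1⟩, ⟨(horth i).2.1, (horth i).2.2.2⟩]
    | zero => simp
    | add x y _ _ hx hy => simp [hx, hy]
    | smul n x _ hx => simp [hx]
  have heN : ∀ z ∈ N, B e z = 0 := fun z hz => (hefN z hz).1
  have hfN : ∀ z ∈ N, B f z = 0 := fun z hz => (hefN z hz).2
  have hdecomp : ∀ u ∈ L, ∃ (a b : ℤ) (w : V), w ∈ N ∧ u = (a : ℚ) • e + (b : ℚ) • f + w := by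
    intro u hu
    rw [← hL, Set.union_assoc, Submodule.span_union, Submodule.mem_sup] at hu
    obtain ⟨y, hy, z, hz, rfl⟩ := hu
    obtain ⟨a, b, rfl⟩ := Submodule.mem_span_pair.1 hy
    exact ⟨a, b, z, hz, by simp only [Int.cast_smul_eq_zsmul]⟩
  -- `v / p` is not in `L`
  have hvp : (p : ℚ)⁻¹ • v ∉ L := by
    intro hmem
    have h1 : (p : ℚ)⁻¹ • v ∈ Submodule.span ℤ {v} := by
      rw [← hv.2]
      exact ⟨Submodule.smul_mem _ _ (Submodule.mem_span_singleton_self v), hmem⟩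
    obtain ⟨n, hn⟩ := Submodule.mem_span_singleton.1 h1
    obtain ⟨x, _, hx⟩ := hdiv.2.2
    have h2 : B ((n : ℚ) • v) x = B ((p : ℚ)⁻¹ • v) x := by
      rw [Int.cast_smul_eq_zsmul, hn]
    rw [map_smul, map_smul, LinearMap.smul_apply, LinearMap.smul_apply, hx, smul_eq_mul,
      smul_eq_mul, inv_mul_cancel₀ hp0] at h2
    have h3 : n * (p : ℤ) = 1 := by exact_mod_cast h2
    have h4 : (p : ℤ) ∣ 1 := ⟨n, by linarith⟩
    exact (Nat.prime_iff_prime_int.1 hp).not_dvd_one h4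
  obtain ⟨a, b, w, hw, hvab⟩ := hdecomp v hv.1
  -- `p` divides `a` and `b`
  have hpa : (p : ℤ) ∣ a := by
    obtain ⟨n, hn⟩ := hdiv.2.1 f hf
    rw [hvab] at hn
    simp only [map_add, map_smul, LinearMap.add_apply, LinearMap.smul_apply, smul_eq_mul,
      hef, halt, bilin_antisymm B halt w f, hfN w hw] at hn
    refine ⟨n, ?_⟩
    have : (a : ℚ) = p * n := by linarith
    exact_mod_cast this
  have hpb : (p : ℤ) ∣ b := by
    obtain ⟨n, hn⟩ := hdiv.2.1 e he
    rw [hvab] at hn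
    simp only [map_add, map_smul, LinearMap.add_apply, LinearMap.smul_apply, smul_eq_mul,
      hfe, halt, bilin_antisymm B halt w e, heN w hw] at hn
    refine ⟨-n, ?_⟩
    have : (b : ℚ) = p * (-n) := by linarith
    exact_mod_cast this
  -- integrality of the form on `N`
  have hpN : ∀ z ∈ N, ∃ n : ℤ, B w z = (p : ℚ) * n := by
    intro z hz
    obtain ⟨n, hn⟩ := hdiv.2.1 z (hNL hz)
    rw [hvab] at hn
    simp only [map_add, map_smul, LinearMap.add_apply, LinearMap.smul_apply, smul_eq_mul,
      heN z hz, hfN z hz] at hn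
    exact ⟨n, by linarith⟩
  -- there is `z` in `L` with `(v, z) = p`
  obtain ⟨z, hz, hvz⟩ := hdiv.2.2
  obtain ⟨α, β, m, hm, rfl⟩ := hdecomp z hz
  obtain ⟨n, hn⟩ := hpN m hm
  have hbez : (a : ℚ) * β - b * α + p * n = p := by
    rw [hvab] at hvz
    simp only [map_add, map_smul, LinearMap.add_apply, LinearMap.smul_apply, smul_eq_mul,
      hef, hfe, halt, bilin_antisymm B halt w e, bilin_antisymm B halt w f, heN w hw, hfN w hw,
      heN m hm, hfN m hm, hn] at hvz
    linarith
  have hbezZ : a * β - b * α + p * n = p := by exact_mod_cast hbez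
  -- first Euclid
  obtain ⟨d, hda, hdb, ⟨s, t, hst⟩, r1⟩ :=
    euclid_rel halt hint he hf hef (heN w hw) (hfN w hw) _ a b le_rfl
  rw [← hvab] at r1
  -- create an `f` coefficient `p n`
  have hmN : -m ∈ N := N.neg_mem hm
  have r2 := transv2_rel halt hint hf (hNL hmN) (hfN _ hmN) ((d : ℚ) • e + w)
  have e2 : (d : ℚ) • e + w + B f ((d : ℚ) • e + w) • (-m) + B (-m) ((d : ℚ) • e + w) • f
      = (d : ℚ) • e + ((p * n : ℤ) : ℚ) • f + (w + (d : ℚ) • m) := by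
    simp only [map_add, map_smul, map_neg, LinearMap.neg_apply, smul_eq_mul, hfe, hfN w hw,
      bilin_antisymm B halt m e, bilin_antisymm B halt m w, heN m hm, hn]
    push_cast
    module
  rw [e2] at r2
  have hw2 : w + (d : ℚ) • m ∈ N := N.add_mem hw (cast_smul_mem N d hm)
  obtain ⟨d', hd1, hd2, ⟨s', t', hst'⟩, r3⟩ :=
    euclid_rel halt hint he hf hef (heN _ hw2) (hfN _ hw2) _ d (p * n) le_rfl
  have hpd : (p : ℤ) ∣ d := by
    rw [hst]; exact dvd_add (hpa.mul_left _) (hpb.mul_left _)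
  have hpd' : (p : ℤ) ∣ d' := by
    rw [hst']; exact dvd_add (hpd.mul_left _) ((dvd_mul_right _ _).mul_left _)
  have hd'p : d' ∣ (p : ℤ) := by
    rw [← hbezZ]
    exact dvd_add (dvd_sub ((hd1.trans hda).mul_right _) ((hd1.trans hdb).mul_right _)) hd2
  have r13 := (r1.trans r2).trans r3
  -- fix the sign of `d'`
  obtain ⟨w₃, hw₃, r4⟩ : ∃ w₃ ∈ N, GammaRel B L v ((p : ℚ) • e + w₃) := by
    rcases Int.associated_iff.1 (associated_of_dvd_dvd hd'p hpd') with h | h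
    · exact ⟨_, hw2, by rw [h] at r13; simpa using r13⟩
    · refine ⟨_, hw2, r13.trans ?_⟩
      rw [h]
      generalize w + (d : ℚ) • m = u at hw2
      have q1 := transv_rel halt hint hf 1 (((-(p : ℤ) : ℤ) : ℚ) • e + u)
      have q2 := transv_rel halt hint he 2 (((-(p : ℤ) : ℤ) : ℚ) • e + (p : ℚ) • f + u)
      have q3 := transv_rel halt hint hf 1 ((p : ℚ) • e + (p : ℚ) • f + u)
      have f1 : ((-(p : ℤ) : ℤ) : ℚ) • e + u +
          (((1 : ℤ) : ℚ) * B f (((-(p : ℤ) : ℤ) : ℚ) • e + u)) • f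
          = ((-(p : ℤ) : ℤ) : ℚ) • e + (p : ℚ) • f + u := by
        simp only [map_add, map_smul, smul_eq_mul, hfe, hfN u hw2]
        push_cast
        module
      have f2 : ((-(p : ℤ) : ℤ) : ℚ) • e + (p : ℚ) • f + u +
          (((2 : ℤ) : ℚ) * B e (((-(p : ℤ) : ℤ) : ℚ) • e + (p : ℚ) • f + u)) • e
          = (p : ℚ) • e + (p : ℚ) • f + u := by
        simp only [map_add, map_smul, smul_eq_mul, hef, halt, heN u hw2]
        push_cast
        module
      have f3 : (p : ℚ) • e + (p : ℚ) • f + u +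
          (((1 : ℤ) : ℚ) * B f ((p : ℚ) • e + (p : ℚ) • f + u)) • f
          = (p : ℚ) • e + u := by
        simp only [map_add, map_smul, smul_eq_mul, hfe, halt, hfN u hw2]
        push_cast
        module
      rw [f1] at q1
      rw [f2] at q2
      rw [f3] at q3
      exact (q1.trans q2).trans q3
  -- coordinates of `w₃`
  have hnd3 := not_div_of_rel r4 _ hvp
  have hw₃' := hw₃
  rw [hN, Submodule.span_union, Submodule.mem_sup] at hw₃'
  obtain ⟨y₁, hy₁, y₂, hy₂, hyy⟩ := hw₃'
  obtain ⟨X, rfl⟩ := (Submodule.mem_span_range_iff_exists_fun ℤ).1 hy₁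
  obtain ⟨Y, rfl⟩ := (Submodule.mem_span_range_iff_exists_fun ℤ).1 hy₂
  classical
  have hBE : ∀ i, B w₃ (E i) = (p : ℚ) * ((-(Y i) : ℤ) : ℚ) := by
    intro i
    have h1 : ∀ j, B (E j) (E i) = 0 := fun j => by
      by_cases h : j = i
      · rw [h, halt]
      · exact (hij j i h).1
    have h2 : ∀ j, j ≠ i → B (F j) (E i) = 0 := fun j h => by
      rw [bilin_antisymm B halt, (hij i j h.symm).2.1, neg_zero]
    rw [← hyy]
    simp only [← Int.cast_smul_eq_zsmul ℚ, map_add, map_sum, map_smul, LinearMap.add_apply,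
      LinearMap.sum_apply, LinearMap.smul_apply, h1, smul_eq_mul, mul_zero,
      Finset.sum_const_zero, zero_add]
    rw [Finset.sum_eq_single i (fun j _ h => by rw [h2 j h, mul_zero])
      (fun h => absurd (Finset.mem_univ i) h), bilin_antisymm B halt, hEF]
    push_cast; ring
  have hBF : ∀ i, B w₃ (F i) = (p : ℚ) * (X i : ℚ) := by
    intro i
    have h1 : ∀ j, B (F j) (F i) = 0 := fun j => by
      by_cases h : j = i
      · rw [h, halt]
      · exact (hij j i h).2.2
    have h2 : ∀ j, j ≠ i → B (E j) (F i) = 0 := fun j h => (hij j i h).2.1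
    rw [← hyy]
    simp only [← Int.cast_smul_eq_zsmul ℚ, map_add, map_sum, map_smul, LinearMap.add_apply,
      LinearMap.sum_apply, LinearMap.smul_apply, h1, smul_eq_mul, mul_zero,
      Finset.sum_const_zero, add_zero]
    rw [Finset.sum_eq_single i (fun j _ h => by rw [h2 j h, mul_zero])
      (fun h => absurd (Finset.mem_univ i) h), hEF]
    ring
  have hEN : ∀ i, E i ∈ N := fun i => Submodule.subset_span (Or.inl ⟨i, rfl⟩)
  have hFN : ∀ i, F i ∈ N := fun i => Submodule.subset_span (Or.inr ⟨i, rfl⟩)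
  have hex : ∃ i, ¬ (p : ℤ) ∣ X i ∨ ¬ (p : ℤ) ∣ Y i := by
    by_contra! hcon
    apply hnd3
    have hterm : ∀ (c : ℤ) (u : V), (p : ℤ) ∣ c → u ∈ L → (p : ℚ)⁻¹ • (c • u) ∈ L := by
      rintro _ u ⟨k, rfl⟩ hu
      have : (p : ℚ)⁻¹ • (((p : ℤ) * k) • u) = (k : ℚ) • u := by
        rw [← Int.cast_smul_eq_zsmul ℚ, smul_smul]
        push_cast
        rw [inv_mul_cancel_left₀ hp0]
      rw [this]
      exact cast_smul_mem L k hu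
    rw [← hyy, smul_add, smul_add, inv_smul_smul₀ hp0, Finset.smul_sum, Finset.smul_sum]
    exact L.add_mem he (L.add_mem
      (L.sum_mem fun i _ => hterm _ _ (hcon i).1 (hE i))
      (L.sum_mem fun i _ => hterm _ _ (hcon i).2 (hF i)))
  obtain ⟨z, hzN, r5⟩ : ∃ z ∈ N, GammaRel B L ((p : ℚ) • e + w₃) z := by
    obtain ⟨i, hi | hi⟩ := hex
    · exact final_rel halt hint hNL he hf hef heN hfN hw₃ (hEN i) (hFN i) p hp 1
        (by rw [hEF]; simp) isUnit_one (X i) _ hi (hBF i) (hBE i)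
    · exact final_rel halt hint hNL he hf hef heN hfN hw₃ (hFN i) (hEN i) p hp (-1)
        (by rw [bilin_antisymm B halt, hEF]; simp) isUnit_one.neg _ _
        (fun h => hi ((dvd_neg).1 h)) (hBE i) (hBF i)
  obtain ⟨γ, hγ, hγv⟩ := r4.trans r5
  exact ⟨γ, hγ, by rw [hγv]; exact hzN⟩
end

section
/- Let Λ be a symplectic lattice and let x be an element of the discriminant group D_Λ of order d. The following four conditions are equivalent: (1) x is contained in a subgroup D₁ of D_Λ isomorphic to (ℤ/d)² with D_Λ = D₁ ⊕ D₁^⊥; (2) x is contained in a subgroup D₁ of D_Λ isomorphic to (ℤ/d)² on which the induced ℚ/ℤ-valued form is nondegenerate; (3) there exists y ∈ D_Λ such that D_Λ = ⟨x, y⟩ ⊕ ⟨x, y⟩^⊥; (4) there exists y ∈ D_Λ of order d with (x, y) = 1/d in ℚ/ℤ. -/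
lemma aux_circ_zero (d : ℕ) (hd : 0 < d) (n : ℤ) :
    n • ((((d : ℚ))⁻¹ : ℚ) : AddCircle (1 : ℚ)) = 0 ↔ (d : ℤ) ∣ n := by
  have hdq : (d : ℚ) ≠ 0 := Nat.cast_ne_zero.mpr hd.ne'
  have h0 : n • ((((d : ℚ))⁻¹ : ℚ) : AddCircle (1 : ℚ)) =
      (((n : ℚ) * (d : ℚ)⁻¹ : ℚ) : AddCircle (1 : ℚ)) := by
    rw [← AddCircle.coe_zsmul, zsmul_eq_mul]
  rw [h0, AddCircle.coe_eq_zero_iff]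
  constructor
  · rintro ⟨m, hm⟩
    refine ⟨m, ?_⟩
    rw [zsmul_eq_mul, mul_one] at hm
    have : (n : ℚ) = (d : ℚ) * m := by rw [hm]; field_simp
    exact_mod_cast this
  · rintro ⟨m, rfl⟩
    refine ⟨m, ?_⟩
    rw [zsmul_eq_mul]
    push_cast
    field_simp

lemma aux_circ_tors (d : ℕ) (hd : 0 < d) (t : AddCircle (1 : ℚ)) (ht : (d : ℤ) • t = 0) :
    ∃ n : ℤ, t = n • ((((d : ℚ))⁻¹ : ℚ) : AddCircle (1 : ℚ)) := by
  have hdq : (d : ℚ) ≠ 0 := Nat.cast_ne_zero.mpr hd.ne'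
  obtain ⟨q, rfl⟩ := QuotientAddGroup.mk_surjective t
  change (d : ℤ) • ((q : ℚ) : AddCircle (1 : ℚ)) = 0 at ht
  rw [← AddCircle.coe_zsmul, AddCircle.coe_eq_zero_iff] at ht
  obtain ⟨m, hm⟩ := ht
  refine ⟨m, ?_⟩
  change ((q : ℚ) : AddCircle (1 : ℚ)) = _
  rw [← AddCircle.coe_zsmul]
  congr 1
  rw [zsmul_eq_mul] at hm ⊢
  rw [zsmul_eq_mul] at hm
  push_cast at hm
  field_simp
  linarith

lemma aux_anti {D : Type*} [AddCommGroup D] (b : D →ₗ[ℤ] D →ₗ[ℤ] AddCircle (1 : ℚ))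
    (hb : ∀ z, b z z = 0) (u v : D) : b u v = - b v u := by
  have h := hb (u + v)
  simp only [map_add, LinearMap.add_apply, hb, zero_add, add_zero] at h
  rw [eq_neg_iff_add_eq_zero, add_comm]
  exact h

/-- A nondegenerate `d`-torsion subgroup containing `x` gives the dual element `y`. -/
lemma aux_to_four {D : Type*} [AddCommGroup D] (b : D →ₗ[ℤ] D →ₗ[ℤ] AddCircle (1 : ℚ))
    (x : D) (d : ℕ) (hd : 0 < d) (hx : addOrderOf x = d)
    (D₁ : Submodule ℤ D) (hxD : x ∈ D₁) (hk : ∀ z ∈ D₁, (d : ℤ) • z = 0)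
    (hnd : ∀ z ∈ D₁, (∀ y ∈ D₁, b z y = 0) → z = 0) :
    ∃ y : D, addOrderOf y = d ∧ b x y = ((((d : ℚ))⁻¹ : ℚ) : AddCircle (1 : ℚ)) := by
  set e : AddCircle (1 : ℚ) := ((((d : ℚ))⁻¹ : ℚ) : AddCircle (1 : ℚ)) with he
  let I : AddSubgroup ℤ :=
    { carrier := {m | ∃ y ∈ D₁, b x y = m • e}
      zero_mem' := ⟨0, D₁.zero_mem, by simp⟩
      add_mem' := by
        rintro m n ⟨y, hy, h1⟩ ⟨z, hz, h2⟩
        exact ⟨y + z, D₁.add_mem hy hz, by rw [map_add, h1, h2, add_smul]⟩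
      neg_mem' := by
        rintro m ⟨y, hy, h1⟩
        exact ⟨-y, D₁.neg_mem hy, by rw [map_neg, h1, neg_smul]⟩ }
  obtain ⟨g, hg⟩ := Int.subgroup_cyclic I
  have hmem : ∀ m, m ∈ I ↔ g ∣ m := by
    intro m
    rw [hg, AddSubgroup.mem_closure_singleton]
    constructor
    · rintro ⟨k, rfl⟩
      exact ⟨k, by rw [smul_eq_mul, mul_comm]⟩
    · rintro ⟨k, rfl⟩
      exact ⟨k, by rw [smul_eq_mul, mul_comm]⟩
  have hdI : (d : ℤ) ∈ I := ⟨0, D₁.zero_mem, by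
    rw [map_zero]; exact ((aux_circ_zero d hd d).2 dvd_rfl).symm⟩
  obtain ⟨k, hkd⟩ := (hmem _).1 hdI
  have hkx : k • x = 0 := by
    apply hnd _ (D₁.smul_mem k hxD)
    intro y hy
    have h1 : (d : ℤ) • b x y = 0 := by rw [← map_smul, hk y hy, map_zero]
    obtain ⟨m, hm⟩ := aux_circ_tors d hd _ h1
    obtain ⟨c, hc⟩ := (hmem m).1 ⟨y, hy, hm⟩
    rw [map_smul, LinearMap.smul_apply, hm, smul_smul]
    apply (aux_circ_zero d hd _).2
    exact ⟨c, by rw [hc, hkd]; ring⟩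
  have hdk : (d : ℤ) ∣ k := by
    rw [← hx]; exact addOrderOf_dvd_iff_zsmul_eq_zero.2 hkx
  obtain ⟨c, hc⟩ := hdk
  have hg1 : g ∣ 1 := by
    refine ⟨c, ?_⟩
    have hdz : (d : ℤ) ≠ 0 := by exact_mod_cast hd.ne'
    apply mul_left_cancel₀ hdz
    rw [hc] at hkd
    linear_combination hkd
  obtain ⟨y, hy, hxy⟩ := (hmem 1).2 hg1
  rw [one_smul] at hxy
  refine ⟨y, ?_, hxy⟩
  apply Nat.dvd_antisymm
  · apply addOrderOf_dvd_of_nsmul_eq_zero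
    rw [← natCast_zsmul]; exact hk y hy
  · have h1 : (addOrderOf y : ℤ) • e = 0 := by
      rw [← hxy, ← map_smul, natCast_zsmul, addOrderOf_nsmul_eq_zero, map_zero]
    exact_mod_cast (aux_circ_zero d hd _).1 h1

/-- Everything that follows from a dual element `y`. -/
lemma aux_from_four {D : Type*} [AddCommGroup D] (b : D →ₗ[ℤ] D →ₗ[ℤ] AddCircle (1 : ℚ))
    (hb : ∀ z, b z z = 0)
    (x y : D) (d : ℕ) (hd : 0 < d) (hx : addOrderOf x = d) (hy : addOrderOf y = d)
    (hxy : b x y = ((((d : ℚ))⁻¹ : ℚ) : AddCircle (1 : ℚ))) (O : Submodule ℤ D)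
    (hO : ∀ z, z ∈ O ↔ ∀ w ∈ Submodule.span ℤ {x, y}, b z w = 0) :
    Nonempty (Submodule.span ℤ {x, y} ≃+ (ZMod d × ZMod d)) ∧
    Submodule.span ℤ {x, y} ⊔ O = ⊤ ∧ Submodule.span ℤ {x, y} ⊓ O = ⊥ := by
  set e : AddCircle (1 : ℚ) := ((((d : ℚ))⁻¹ : ℚ) : AddCircle (1 : ℚ)) with he
  have hyx : b y x = - e := by rw [aux_anti b hb, hxy]
  have hdx : (d : ℤ) • x = 0 := by rw [← hx, natCast_zsmul, addOrderOf_nsmul_eq_zero]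
  have hdy : (d : ℤ) • y = 0 := by rw [← hy, natCast_zsmul, addOrderOf_nsmul_eq_zero]
  have hxS : x ∈ Submodule.span ℤ {x, y} := Submodule.subset_span (by simp)
  have hyS : y ∈ Submodule.span ℤ {x, y} := Submodule.subset_span (by simp)
  have hcx : ∀ p q : ℤ, b (p • x + q • y) x = - (q • e) := by
    intro p q
    simp [hb, hyx]
  have hcy : ∀ p q : ℤ, b (p • x + q • y) y = p • e := by
    intro p q
    simp [hb, hxy]
  have hdvx : ∀ p : ℤ, (d : ℤ) ∣ p → p • x = 0 := by
    rintro p ⟨c, rfl⟩; rw [mul_comm, mul_smul, hdx, smul_zero]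
  have hdvy : ∀ p : ℤ, (d : ℤ) ∣ p → p • y = 0 := by
    rintro p ⟨c, rfl⟩; rw [mul_comm, mul_smul, hdy, smul_zero]
  have hdv : ∀ p q : ℤ, b (p • x + q • y) x = 0 → b (p • x + q • y) y = 0 →
      (d : ℤ) ∣ p ∧ (d : ℤ) ∣ q := by
    intro p q h1 h2
    rw [hcx, neg_eq_zero] at h1
    rw [hcy] at h2
    exact ⟨(aux_circ_zero d hd _).1 h2, (aux_circ_zero d hd _).1 h1⟩
  refine ⟨?_, ?_, ?_⟩
  · let fx : ZMod d →+ D := ZMod.lift d ⟨zmultiplesHom D x, by simpa using hdx⟩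
    let fy : ZMod d →+ D := ZMod.lift d ⟨zmultiplesHom D y, by simpa using hdy⟩
    have hfx : ∀ p : ℤ, fx (p : ZMod d) = p • x := by intro p; simp [fx]
    have hfy : ∀ p : ℤ, fy (p : ZMod d) = p • y := by intro p; simp [fy]
    let f : ZMod d × ZMod d →+ D := fx.coprod fy
    have hf : ∀ p q : ℤ, f ((p : ZMod d), (q : ZMod d)) = p • x + q • y := by
      intro p q
      simp only [f, AddMonoidHom.coprod_apply, hfx, hfy]
    have hfS : ∀ w, f w ∈ Submodule.span ℤ {x, y} := by
      rintro ⟨p, q⟩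
      obtain ⟨p, rfl⟩ := ZMod.intCast_surjective p
      obtain ⟨q, rfl⟩ := ZMod.intCast_surjective q
      rw [hf]
      exact Submodule.mem_span_pair.2 ⟨p, q, rfl⟩
    let F : ZMod d × ZMod d →+ Submodule.span ℤ {x, y} :=
      { toFun := fun w => ⟨f w, hfS w⟩
        map_zero' := by ext; simp
        map_add' := by intro u v; ext; simp }
    refine ⟨(AddEquiv.ofBijective F ⟨?_, ?_⟩).symm⟩
    · rw [injective_iff_map_eq_zero]
      rintro ⟨p, q⟩ h
      obtain ⟨p, rfl⟩ := ZMod.intCast_surjective p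
      obtain ⟨q, rfl⟩ := ZMod.intCast_surjective q
      have h' : f ((p : ZMod d), (q : ZMod d)) = 0 := congrArg Subtype.val h
      rw [hf] at h'
      obtain ⟨h1, h2⟩ := hdv p q (by rw [h']; simp) (by rw [h']; simp)
      rw [(ZMod.intCast_zmod_eq_zero_iff_dvd p d).2 h1,
        (ZMod.intCast_zmod_eq_zero_iff_dvd q d).2 h2]
      rfl
    · rintro ⟨w, hw⟩
      obtain ⟨p, q, rfl⟩ := Submodule.mem_span_pair.1 hw
      exact ⟨((p : ZMod d), (q : ZMod d)), Subtype.ext (hf p q)⟩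
  · rw [eq_top_iff]
    intro z _
    obtain ⟨m, hm⟩ := aux_circ_tors d hd (b z x) (by rw [← map_smul, hdx, map_zero])
    obtain ⟨n, hn⟩ := aux_circ_tors d hd (b z y) (by rw [← map_smul, hdy, map_zero])
    have hz : z = (n • x + (-m) • y) + (z - (n • x + (-m) • y)) := by abel
    rw [hz]
    refine Submodule.add_mem_sup (Submodule.mem_span_pair.2 ⟨n, -m, rfl⟩) ?_
    rw [hO]
    intro w hw
    obtain ⟨p, q, rfl⟩ := Submodule.mem_span_pair.1 hw
    have h1 : b (z - (n • x + (-m) • y)) x = 0 := by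
      rw [map_sub, LinearMap.sub_apply, hcx, hm, ← he]; simp
    have h2 : b (z - (n • x + (-m) • y)) y = 0 := by
      rw [map_sub, LinearMap.sub_apply, hcy, hn, ← he, sub_self]
    rw [map_add, map_smul, map_smul, h1, h2]; simp
  · rw [eq_bot_iff]
    rintro z ⟨h1, h2⟩
    obtain ⟨p, q, rfl⟩ := Submodule.mem_span_pair.1 h1
    have h2' := (hO _).1 h2
    obtain ⟨h3, h4⟩ := hdv p q (h2' x hxS) (h2' y hyS)
    rw [hdvx p h3, hdvy q h4]; simp

lemma aux_main {D : Type*} [AddCommGroup D] [inst : Module ℤ D]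
    (b : D →ₗ[ℤ] D →ₗ[ℤ] AddCircle (1 : ℚ)) (hb : ∀ z, b z z = 0)
    (O : Submodule ℤ D → Submodule ℤ D)
    (hO : ∀ S z, z ∈ O S ↔ ∀ w ∈ S, b z w = 0)
    (x : D) (d : ℕ) (hd : 0 < d) (hx : addOrderOf x = d) :
    ((∃ D₁ : Submodule ℤ D, x ∈ D₁ ∧ Nonempty (D₁ ≃+ (ZMod d × ZMod d)) ∧
        D₁ ⊔ O D₁ = ⊤ ∧ D₁ ⊓ O D₁ = ⊥) ↔
      (∃ D₁ : Submodule ℤ D, x ∈ D₁ ∧ Nonempty (D₁ ≃+ (ZMod d × ZMod d)) ∧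
        ∀ z ∈ D₁, (∀ y ∈ D₁, b z y = 0) → z = 0)) ∧
    ((∃ D₁ : Submodule ℤ D, x ∈ D₁ ∧ Nonempty (D₁ ≃+ (ZMod d × ZMod d)) ∧
        D₁ ⊔ O D₁ = ⊤ ∧ D₁ ⊓ O D₁ = ⊥) ↔
      (∃ y : D, Submodule.span ℤ {x, y} ⊔ O (Submodule.span ℤ {x, y}) = ⊤ ∧
        Submodule.span ℤ {x, y} ⊓ O (Submodule.span ℤ {x, y}) = ⊥)) ∧
    ((∃ D₁ : Submodule ℤ D, x ∈ D₁ ∧ Nonempty (D₁ ≃+ (ZMod d × ZMod d)) ∧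
        D₁ ⊔ O D₁ = ⊤ ∧ D₁ ⊓ O D₁ = ⊥) ↔
      (∃ y : D, addOrderOf y = d ∧
        b x y = ((((d : ℚ))⁻¹ : ℚ) : AddCircle (1 : ℚ)))) := by
  obtain rfl : inst = AddCommGroup.toIntModule D := Subsingleton.elim _ _
  have nondeg : ∀ S : Submodule ℤ D, S ⊓ O S = ⊥ →
      ∀ z ∈ S, (∀ y ∈ S, b z y = 0) → z = 0 := by
    intro S hS z hz h
    have : z ∈ S ⊓ O S := ⟨hz, (hO S z).2 h⟩
    rw [hS] at this
    simpa using this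
  have h12 : (∃ D₁ : Submodule ℤ D, x ∈ D₁ ∧ Nonempty (D₁ ≃+ (ZMod d × ZMod d)) ∧
        D₁ ⊔ O D₁ = ⊤ ∧ D₁ ⊓ O D₁ = ⊥) →
      (∃ D₁ : Submodule ℤ D, x ∈ D₁ ∧ Nonempty (D₁ ≃+ (ZMod d × ZMod d)) ∧
        ∀ z ∈ D₁, (∀ y ∈ D₁, b z y = 0) → z = 0) := by
    rintro ⟨S, h1, h2, -, h4⟩
    exact ⟨S, h1, h2, nondeg S h4⟩
  have h24 : (∃ D₁ : Submodule ℤ D, x ∈ D₁ ∧ Nonempty (D₁ ≃+ (ZMod d × ZMod d)) ∧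
        ∀ z ∈ D₁, (∀ y ∈ D₁, b z y = 0) → z = 0) →
      (∃ y : D, addOrderOf y = d ∧
        b x y = ((((d : ℚ))⁻¹ : ℚ) : AddCircle (1 : ℚ))) := by
    rintro ⟨S, h1, ⟨φ⟩, h3⟩
    refine aux_to_four b x d hd hx S h1 ?_ h3
    intro z hz
    have h5 : d • (⟨z, hz⟩ : S) = 0 := by
      apply φ.injective
      rw [map_nsmul, map_zero]
      ext <;> simp
    have h6 := congrArg Subtype.val h5
    rw [natCast_zsmul]
    simpa using h6
  have h34 : (∃ y : D, Submodule.span ℤ {x, y} ⊔ O (Submodule.span ℤ {x, y}) = ⊤ ∧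
        Submodule.span ℤ {x, y} ⊓ O (Submodule.span ℤ {x, y}) = ⊥) →
      (∃ y : D, addOrderOf y = d ∧
        b x y = ((((d : ℚ))⁻¹ : ℚ) : AddCircle (1 : ℚ))) := by
    rintro ⟨y, -, h2⟩
    have hxS : x ∈ Submodule.span ℤ {x, y} := Submodule.subset_span (by simp)
    have hyS : y ∈ Submodule.span ℤ {x, y} := Submodule.subset_span (by simp)
    have hn := nondeg _ h2
    refine aux_to_four b x d hd hx _ hxS ?_ hn
    have hdx : (d : ℤ) • x = 0 := by rw [← hx, natCast_zsmul, addOrderOf_nsmul_eq_zero]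
    have hdy : (d : ℤ) • y = 0 := by
      apply hn _ (Submodule.smul_mem _ _ hyS)
      intro w hw
      obtain ⟨p, q, rfl⟩ := Submodule.mem_span_pair.1 hw
      have h3 : b ((d : ℤ) • y) x = 0 := by
        rw [aux_anti b hb, map_smul, ← LinearMap.smul_apply, ← map_smul, hdx]; simp
      have h4 : b ((d : ℤ) • y) y = 0 := by
        rw [map_smul, LinearMap.smul_apply, hb, smul_zero]
      rw [map_add, LinearMap.map_smul (b _) p x, LinearMap.map_smul (b _) q y, h3, h4]; simp
    intro z hz
    obtain ⟨p, q, rfl⟩ := Submodule.mem_span_pair.1 hz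
    rw [smul_add, smul_comm, hdx, smul_comm, hdy]; simp
  have h41 : (∃ y : D, addOrderOf y = d ∧
        b x y = ((((d : ℚ))⁻¹ : ℚ) : AddCircle (1 : ℚ))) →
      (∃ D₁ : Submodule ℤ D, x ∈ D₁ ∧ Nonempty (D₁ ≃+ (ZMod d × ZMod d)) ∧
        D₁ ⊔ O D₁ = ⊤ ∧ D₁ ⊓ O D₁ = ⊥) := by
    rintro ⟨y, hy, hxy⟩
    exact ⟨Submodule.span ℤ {x, y}, Submodule.subset_span (by simp),
      aux_from_four b hb x y d hd hx hy hxy _ (hO _)⟩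
  have h43 : (∃ y : D, addOrderOf y = d ∧
        b x y = ((((d : ℚ))⁻¹ : ℚ) : AddCircle (1 : ℚ))) →
      (∃ y : D, Submodule.span ℤ {x, y} ⊔ O (Submodule.span ℤ {x, y}) = ⊤ ∧
        Submodule.span ℤ {x, y} ⊓ O (Submodule.span ℤ {x, y}) = ⊥) := by
    rintro ⟨y, hy, hxy⟩
    exact ⟨y, (aux_from_four b hb x y d hd hx hy hxy _ (hO _)).2⟩
  exact ⟨⟨h12, fun h => h41 (h24 h)⟩, ⟨fun h => h43 (h24 (h12 h)), fun h => h41 (h34 h)⟩,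
    ⟨fun h => h24 (h12 h), h41⟩⟩

/-- **Characterizations of splitting elements** of the discriminant group.
For `x ∈ D_Λ` of order `d` the four conditions of Lemma 3.1 are equivalent. -/
theorem splitting_element_characterizations
    (V : Type) [AddCommGroup V] [Module ℚ V]
    (B : V →ₗ[ℚ] V →ₗ[ℚ] ℚ)
    (halt : ∀ v, B v v = 0)
    (hnd : ∀ v : V, (∀ w, B v w = 0) → v = 0)
    (L : Submodule ℤ V) (hfg : L.FG)
    (hspan : Submodule.span ℚ (L : Set V) = ⊤)
    (hint : ∀ x ∈ L, ∀ y ∈ L, ∃ n : ℤ, B x y = (n : ℚ))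
    (x : DiscGroup B L) (d : ℕ) (hd0 : 0 < d) (hord : addOrderOf x = d) :
    ((∃ D₁ : Submodule ℤ (DiscGroup B L), x ∈ D₁ ∧
        Nonempty (D₁ ≃+ (ZMod d × ZMod d)) ∧
        D₁ ⊔ discOrth B L halt D₁ = ⊤ ∧ D₁ ⊓ discOrth B L halt D₁ = ⊥) ↔
      (∃ D₁ : Submodule ℤ (DiscGroup B L), x ∈ D₁ ∧
        Nonempty (D₁ ≃+ (ZMod d × ZMod d)) ∧
        ∀ z ∈ D₁, (∀ y ∈ D₁, discForm B L halt z y = 0) → z = 0)) ∧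
    ((∃ D₁ : Submodule ℤ (DiscGroup B L), x ∈ D₁ ∧
        Nonempty (D₁ ≃+ (ZMod d × ZMod d)) ∧
        D₁ ⊔ discOrth B L halt D₁ = ⊤ ∧ D₁ ⊓ discOrth B L halt D₁ = ⊥) ↔
      (∃ y : DiscGroup B L,
        Submodule.span ℤ {x, y} ⊔ discOrth B L halt (Submodule.span ℤ {x, y}) = ⊤ ∧
        Submodule.span ℤ {x, y} ⊓ discOrth B L halt (Submodule.span ℤ {x, y}) = ⊥)) ∧
    ((∃ D₁ : Submodule ℤ (DiscGroup B L), x ∈ D₁ ∧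
        Nonempty (D₁ ≃+ (ZMod d × ZMod d)) ∧
        D₁ ⊔ discOrth B L halt D₁ = ⊤ ∧ D₁ ⊓ discOrth B L halt D₁ = ⊥) ↔
      (∃ y : DiscGroup B L, addOrderOf y = d ∧
        discForm B L halt x y = ((((d : ℚ))⁻¹ : ℚ) : AddCircle (1 : ℚ)))) := by
  refine aux_main (discForm B L halt) ?_ (discOrth B L halt) ?_ x d hd0 hord
  · intro z
    obtain ⟨v, rfl⟩ := Submodule.Quotient.mk_surjective _ z
    show ((B (v : V) (v : V) : ℚ) : AddCircle (1 : ℚ)) = 0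
    rw [halt]
    rfl
  · intro S z
    simp only [discOrth, Submodule.mem_iInf, LinearMap.mem_ker, LinearMap.flip_apply]
end

section
/- Let Λ be a symplectic lattice admitting an orthogonal direct sum decomposition Λ = U₁ ⊕ U₂ ⊕ Λ'' with U₁, U₂ isometric to U. A primitive vector v ∈ Λ is splitting if and only if the element [v*] ∈ D_Λ is splitting. Consequently, v ↦ [v*] induces a bijection from the set of Γ_Λ-equivalence classes of splitting primitive vectors of Λ onto the set of splitting elements of D_Λ. -/
section helpers

variable {V : Type} [AddCommGroup V] [Module ℚ V]

/-- pairing in the discriminant group of two classes -/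
lemma disc_apply (B : V →ₗ[ℚ] V →ₗ[ℚ] ℚ) (L : Submodule ℤ V) (halt : ∀ v, B v v = 0)
    (a b : dualLattice B L) :
    discForm B L halt (discCls B L a) (discCls B L b)
      = ((B a.1 b.1 : ℚ) : AddCircle (1 : ℚ)) := rfl

lemma circle_zero_iff (q : ℚ) : ((q : AddCircle (1 : ℚ)) = 0) ↔ ∃ n : ℤ, q = n := by
  constructor
  · intro h
    obtain ⟨n, hn⟩ := (QuotientAddGroup.eq_zero_iff _).mp h
    exact ⟨n, by simpa using hn.symm⟩
  · rintro ⟨n, rfl⟩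
    exact coe_int_addCircle n

lemma mem_discOrth (B : V →ₗ[ℚ] V →ₗ[ℚ] ℚ) (L : Submodule ℤ V) (halt : ∀ v, B v v = 0)
    (D' : Submodule ℤ (DiscGroup B L)) (a : dualLattice B L) :
    discCls B L a ∈ discOrth B L halt D' ↔
      ∀ b : dualLattice B L, discCls B L b ∈ D' → ∃ n : ℤ, B a.1 b.1 = n := by
  unfold discOrth
  simp only [Submodule.mem_iInf, LinearMap.mem_ker, LinearMap.flip_apply]
  constructor
  · intro h b hb
    have := h _ hb
    rwa [disc_apply, circle_zero_iff] at this
  · intro h y hy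
    obtain ⟨b, rfl⟩ := Submodule.Quotient.mk_surjective _ y
    have := h b hy
    rw [← circle_zero_iff, ← disc_apply B L halt] at this
    exact this

lemma discCls_eq (B : V →ₗ[ℚ] V →ₗ[ℚ] ℚ) (L : Submodule ℤ V) (a b : dualLattice B L) :
    discCls B L a = discCls B L b ↔ a.1 - b.1 ∈ L := by
  unfold discCls
  rw [Submodule.Quotient.eq]
  rfl

lemma discCls_zero (B : V →ₗ[ℚ] V →ₗ[ℚ] ℚ) (L : Submodule ℤ V) (a : dualLattice B L) :
    discCls B L a = 0 ↔ a.1 ∈ L := by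
  unfold discCls
  rw [Submodule.Quotient.mk_eq_zero]
  rfl

lemma B_zsmul_left (B : V →ₗ[ℚ] V →ₗ[ℚ] ℚ) (n : ℤ) (x y : V) :
    B (n • x) y = n * B x y := by
  rw [← Int.cast_smul_eq_zsmul ℚ n x, map_smul, LinearMap.smul_apply, smul_eq_mul]

lemma B_zsmul_right (B : V →ₗ[ℚ] V →ₗ[ℚ] ℚ) (n : ℤ) (x y : V) :
    B x (n • y) = n * B x y := by
  rw [← Int.cast_smul_eq_zsmul ℚ n y, map_smul, smul_eq_mul]

/-- order of `[v*]` -/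
lemma order_vstar {B : V →ₗ[ℚ] V →ₗ[ℚ] ℚ} {L : Submodule ℤ V} {v : V} {d : ℕ}
    (hv : IsPrimitive L v) (hd : HasDiv B L v d) :
    addOrderOf (discCls B L ⟨vstar v d, vstar_mem hd⟩) = d := by
  have hd0 : (d : ℚ) ≠ 0 := Nat.cast_ne_zero.mpr hd.1.ne'
  have key : ∀ k : ℕ, k • discCls B L ⟨vstar v d, vstar_mem hd⟩ = 0 ↔ d ∣ k := by
    intro k
    have e : k • discCls B L ⟨vstar v d, vstar_mem hd⟩
        = discCls B L (k • ⟨vstar v d, vstar_mem hd⟩) := rfl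
    rw [e, discCls_zero]
    have e2 : ((k • (⟨vstar v d, vstar_mem hd⟩ : dualLattice B L) : dualLattice B L) : V)
        = ((k : ℚ) * (d : ℚ)⁻¹) • v := by
      rw [Submodule.coe_smul_of_tower, mul_smul, Nat.cast_smul_eq_nsmul]; rfl
    rw [e2]
    constructor
    · intro h
      have h2 : ((k : ℚ) * (d : ℚ)⁻¹) • v ∈
          (Submodule.span ℚ {v}).restrictScalars ℤ ⊓ L :=
        ⟨Submodule.smul_mem _ _ (Submodule.mem_span_singleton_self v), h⟩
      rw [hv.2, Submodule.mem_span_singleton] at h2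
      obtain ⟨m, hm⟩ := h2
      obtain ⟨x, hx, hxd⟩ := hd.2.2
      have h3 := congrArg (fun t => B t x) hm
      simp only [B_zsmul_left, map_smul, LinearMap.smul_apply, smul_eq_mul, hxd] at h3
      have h4 : (m : ℚ) * d = k := by
        rw [h3]; field_simp
      have h5 : m * (d : ℤ) = k := by exact_mod_cast h4
      exact Int.natCast_dvd_natCast.1 ⟨m, by rw [← h5]; ring⟩
    · rintro ⟨m, rfl⟩
      have : (((d * m : ℕ) : ℚ) * (d : ℚ)⁻¹) = ((m : ℤ) : ℚ) := by
        push_cast; field_simp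
      rw [this, Int.cast_smul_eq_zsmul]
      exact L.smul_mem _ hv.1
  apply Nat.dvd_antisymm
  · exact addOrderOf_dvd_of_nsmul_eq_zero ((key d).2 dvd_rfl)
  · exact (key _).1 (addOrderOf_nsmul_eq_zero _)

/-- Splitting vector gives a complementary vector. -/
lemma split_to_pair {B : V →ₗ[ℚ] V →ₗ[ℚ] ℚ} (halt : ∀ v, B v v = 0)
    {L : Submodule ℤ V} (hfg : L.FG)
    {v : V} {d : ℕ} (hv : IsPrimitive L v) (hd : HasDiv B L v d)
    (hs : IsSplitVec B L v) :
    ∃ w ∈ L, B v w = d ∧ ∀ y ∈ L, ∃ n : ℤ, B w y = n * d := by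
  obtain ⟨L₁, hvL, hL₁, hrank, hsup, -⟩ := hs
  have hd0 : (d : ℚ) ≠ 0 := Nat.cast_ne_zero.mpr hd.1.ne'
  obtain ⟨x, hx, hxd⟩ := hd.2.2
  rw [← hsup] at hx
  obtain ⟨w, hw, z, hz, rfl⟩ := Submodule.mem_sup.1 hx
  have hvz : B v z = 0 := by rw [bilin_antisymm B halt, hz.2 v hvL, neg_zero]
  have hvw : B v w = d := by rw [map_add, hvz, add_zero] at hxd; exact hxd
  have : Module.Finite ℤ L := Module.Finite.iff_fg.2 hfg
  have hfin : Module.Finite ℤ L₁ := by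
    have : Module.Finite ℤ (L₁.comap L.subtype) := inferInstance
    exact Module.Finite.equiv (Submodule.comapSubtypeEquivOfLe hL₁)
  refine ⟨w, hL₁ hw, hvw, ?_⟩
  intro y₀ hy₀
  rw [← hsup] at hy₀
  obtain ⟨y, hy, z, hz, rfl⟩ := Submodule.mem_sup.1 hy₀
  have hwz : B w z = 0 := by rw [bilin_antisymm B halt, hz.2 w hw, neg_zero]
  obtain ⟨n, hn⟩ := hd.2.1 y (hL₁ hy)
  have hdep : ¬ LinearIndependent ℤ ![(⟨v, hvL⟩ : L₁), ⟨w, hw⟩, ⟨y, hy⟩] := by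
    intro h
    have := h.fintype_card_le_finrank
    rw [hrank] at this
    simp at this
  rw [Fintype.not_linearIndependent_iff] at hdep
  obtain ⟨g, hg, i, hi⟩ := hdep
  have hg' := congrArg (Subtype.val) hg
  simp only [Fin.sum_univ_three, Matrix.cons_val_zero, Matrix.cons_val_one,
    Matrix.cons_val_two] at hg'
  have hg2 : g 0 • v + g 1 • w + g 2 • y = 0 := hg'
  have p1 := congrArg (B v) hg2
  simp only [map_add, B_zsmul_right, halt, hvw, hn, map_zero] at p1
  have p2 := congrArg (fun t => B t w) hg2
  simp only [map_add, LinearMap.add_apply, B_zsmul_left, halt, hvw, map_zero,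
    LinearMap.zero_apply] at p2
  have p1' : (g 1 : ℚ) = - g 2 * n := by
    have : (d : ℚ) * (g 1 + g 2 * n) = 0 := by linear_combination p1
    have := (mul_eq_zero.1 this).resolve_left hd0
    linear_combination this
  have hg20 : (g 2 : ℚ) ≠ 0 := by
    intro h0
    have h1 : (g 1 : ℚ) = 0 := by rw [p1', h0]; ring
    rw [h0] at p2
    have h00 : (g 0 : ℚ) = 0 := by
      have : (g 0 : ℚ) * d = 0 := by linear_combination p2
      exact (mul_eq_zero.1 this).resolve_right hd0
    apply hi
    fin_cases i
    · exact_mod_cast h00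
    · exact_mod_cast h1
    · exact_mod_cast h0
  have hrat : y - n • w = (-(g 0 : ℚ) / g 2) • v := by
    have e : (g 2 : ℚ) • (y - n • w) = (-(g 0 : ℚ)) • v := by
      have e1 : (g 0 : ℚ) • v + (g 1 : ℚ) • w + (g 2 : ℚ) • y = 0 := by
        simpa only [Int.cast_smul_eq_zsmul] using hg2
      rw [← Int.cast_smul_eq_zsmul ℚ n w]
      rw [p1'] at e1
      have : (g 2 : ℚ) • (y - (n : ℚ) • w) - (-(g 0 : ℚ)) • v = 0 := by
        rw [← e1]; module
      exact sub_eq_zero.1 this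
    rw [div_eq_inv_mul, mul_smul, ← e, smul_smul, inv_mul_cancel₀ hg20, one_smul]
  have hmem : y - n • w ∈ (Submodule.span ℚ {v}).restrictScalars ℤ ⊓ L := by
    refine ⟨?_, L.sub_mem (hL₁ hy) (L.smul_mem _ (hL₁ hw))⟩
    rw [hrat]
    exact Submodule.smul_mem _ _ (Submodule.mem_span_singleton_self v)
  rw [hv.2, Submodule.mem_span_singleton] at hmem
  obtain ⟨m, hm⟩ := hmem
  have hy' : y = n • w + m • v := by rw [hm]; abel
  refine ⟨-m, ?_⟩
  rw [map_add, hwz, hy', map_add, B_zsmul_right, B_zsmul_right, halt,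
    bilin_antisymm B halt w v, hvw]
  push_cast; ring

lemma pair_to_split {B : V →ₗ[ℚ] V →ₗ[ℚ] ℚ} (halt : ∀ v, B v v = 0)
    {L : Submodule ℤ V}
    {v : V} {d : ℕ} (hv : IsPrimitive L v) (hd : HasDiv B L v d)
    (hs : ∃ w ∈ L, B v w = d ∧ ∀ y ∈ L, ∃ n : ℤ, B w y = n * d) :
    IsSplitVec B L v := by
  obtain ⟨w, hw, hvw, hwd⟩ := hs
  have hd0 : (d : ℚ) ≠ 0 := Nat.cast_ne_zero.mpr hd.1.ne'
  have hwv : B w v = -d := by rw [bilin_antisymm B halt, hvw]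
  have hle : Submodule.span ℤ {v, w} ≤ L := by
    rw [Submodule.span_le]
    rintro x (rfl | rfl)
    · exact hv.1
    · exact hw
  have hli : LinearIndependent ℤ ![v, w] := by
    rw [LinearIndependent.pair_iff]
    intro s t h
    have p1 := congrArg (B v) h
    have p2 := congrArg (B w) h
    simp only [map_add, B_zsmul_right, halt, hvw, hwv, map_zero] at p1 p2
    constructor
    · have : (s : ℚ) * d = 0 := by linear_combination -p2
      exact_mod_cast (mul_eq_zero.1 this).resolve_right hd0
    · have : (t : ℚ) * d = 0 := by linear_combination p1
      exact_mod_cast (mul_eq_zero.1 this).resolve_right hd0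
  refine ⟨Submodule.span ℤ {v, w}, Submodule.subset_span (by simp), hle, ?_, ?_, ?_⟩
  · have := finrank_span_eq_card hli
    rw [Matrix.range_cons, Matrix.range_cons, Matrix.range_empty, Set.union_empty] at this
    rw [Set.singleton_union, Fintype.card_fin] at this
    convert this
  · apply le_antisymm
    · exact sup_le hle (fun z hz => hz.1)
    · intro y hy
      obtain ⟨n, hn⟩ := hd.2.1 y hy
      obtain ⟨m, hm⟩ := hwd y hy
      rw [Submodule.mem_sup]
      refine ⟨n • w + (-m) • v, ?_, y - (n • w + (-m) • v), ⟨?_, ?_⟩, by abel⟩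
      · rw [Submodule.mem_span_pair]
        exact ⟨-m, n, by abel⟩
      · exact L.sub_mem hy (L.add_mem (L.smul_mem _ hw) (L.smul_mem _ hv.1))
      · intro t ht
        rw [Submodule.mem_span_pair] at ht
        obtain ⟨a, b, rfl⟩ := ht
        rw [bilin_antisymm B halt]
        simp only [map_add, map_sub, LinearMap.add_apply, B_zsmul_left, B_zsmul_right, halt,
          hn, hm, hvw, hwv]
        push_cast; ring
  · rw [eq_bot_iff]
    rintro y ⟨hy, hy2⟩
    rw [SetLike.mem_coe, Submodule.mem_span_pair] at hy
    obtain ⟨a, b, rfl⟩ := hy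
    have h1 := hy2.2 v (Submodule.subset_span (by simp))
    have h2 := hy2.2 w (Submodule.subset_span (by simp))
    simp only [map_add, LinearMap.add_apply, B_zsmul_left, halt, hvw, hwv] at h1 h2
    have hb : (b : ℚ) = 0 := by
      have : (b : ℚ) * d = 0 := by linear_combination -h1
      exact (mul_eq_zero.1 this).resolve_right hd0
    have ha : (a : ℚ) = 0 := by
      have : (a : ℚ) * d = 0 := by linear_combination h2
      exact (mul_eq_zero.1 this).resolve_right hd0
    have hb' : b = 0 := by exact_mod_cast hb
    have ha' : a = 0 := by exact_mod_cast ha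
    simp [ha', hb']

lemma splitElem_to_pair {B : V →ₗ[ℚ] V →ₗ[ℚ] ℚ} (halt : ∀ v, B v v = 0)
    {L : Submodule ℤ V}
    {v : V} {d : ℕ} (hv : IsPrimitive L v) (hd : HasDiv B L v d)
    (hs : IsSplitElem B L halt (discCls B L ⟨vstar v d, vstar_mem hd⟩)) 
    (hint : ∀ x ∈ L, ∀ y ∈ L, ∃ n : ℤ, B x y = (n : ℚ)) :
    ∃ w ∈ L, B v w = d ∧ ∀ y ∈ L, ∃ n : ℤ, B w y = n * d := by
  have hd0 : (d : ℚ) ≠ 0 := Nat.cast_ne_zero.mpr hd.1.ne'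
  have hdz : (d : ℤ) ≠ 0 := by exact_mod_cast hd.1.ne'
  have hord := order_vstar hv hd
  obtain ⟨D', hxD, ⟨e⟩, -, hinf⟩ := hs
  rw [hord] at e
  have htors : ∀ b : dualLattice B L, discCls B L b ∈ D' → (d : ℤ) • b.1 ∈ L := by
    intro b hb
    have h1 : d • (⟨discCls B L b, hb⟩ : D') = 0 := by
      apply e.injective
      rw [map_nsmul, map_zero]
      ext <;> simp
    have h2 : d • discCls B L b = 0 := congrArg Subtype.val h1
    have h3 : discCls B L (d • b) = 0 := h2
    rw [discCls_zero] at h3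
    simpa using h3
  let P : Submodule ℤ V := (D'.comap (Submodule.mkQ _)).map (dualLattice B L).subtype
  have hP : ∀ y, y ∈ P ↔ ∃ b : dualLattice B L, discCls B L b ∈ D' ∧ b.1 = y := by
    intro y
    exact Iff.rfl
  let I : Submodule ℤ ℤ := (P.map ((B v).restrictScalars ℤ)).comap
    (Algebra.linearMap ℤ ℚ)
  have hI : ∀ m : ℤ, m ∈ I ↔ ∃ y ∈ P, B v y = m := by
    intro m
    exact Iff.rfl
  have hdI : (d : ℤ) ∈ I := by
    obtain ⟨x, hx, hxd⟩ := hd.2.2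
    rw [hI]
    refine ⟨x, (hP x).2 ⟨⟨x, fun y hy => hint x hx y hy⟩, ?_, rfl⟩, by rw [hxd]; simp⟩
    rw [(discCls_zero B L _).2 hx]
    exact D'.zero_mem
  have h1I : (1 : ℤ) ∈ I := by
    let g := Submodule.IsPrincipal.generator I
    have hgI : ∀ m, m ∈ I ↔ g ∣ m := fun m => by
      have : m ∈ I ↔ m ∈ Ideal.span {g} := by
        have : Ideal.span {g} = I := Submodule.IsPrincipal.span_singleton_generator I
        rw [this]
      rw [this, Ideal.mem_span_singleton]
    obtain ⟨k, hk⟩ := (hgI _).1 hdI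
    have hk0 : discCls B L (k • ⟨vstar v d, vstar_mem hd⟩) = 0 := by
      have : discCls B L (k • ⟨vstar v d, vstar_mem hd⟩) ∈ D' ⊓ discOrth B L halt D' := by
        refine ⟨D'.smul_mem k hxD, ?_⟩
        rw [SetLike.mem_coe, mem_discOrth]
        intro b hb
        obtain ⟨m, hm⟩ := b.2 v hv.1
        have hmI : -m ∈ I := (hI _).2 ⟨b.1, (hP _).2 ⟨b, hb, rfl⟩, by
          rw [bilin_antisymm B halt, hm]; simp⟩
        obtain ⟨t, ht⟩ := (hgI _).1 hmI
        refine ⟨t, ?_⟩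
        rw [Submodule.coe_smul, B_zsmul_left]
        show (k : ℚ) * B ((d : ℚ)⁻¹ • v) b.1 = t
        rw [map_smul, LinearMap.smul_apply, bilin_antisymm B halt, hm, smul_eq_mul]
        have hk' : (d : ℚ) = g * k := by exact_mod_cast hk
        have ht' : -(m : ℚ) = g * t := by exact_mod_cast ht
        rw [ht']
        field_simp
        rw [hk']; ring
      rw [hinf] at this
      exact this
    have hk1 : k • discCls B L ⟨vstar v d, vstar_mem hd⟩ = 0 := hk0
    have hdk : (d : ℤ) ∣ k := by
      rw [← hord]; exact addOrderOf_dvd_iff_zsmul_eq_zero.2 hk1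
    obtain ⟨s, hs⟩ := hdk
    rw [hgI]
    refine ⟨s, ?_⟩
    have : (d : ℤ) * (g * s - 1) = 0 := by rw [hs] at hk; linear_combination -hk
    have := (mul_eq_zero.1 this).resolve_left hdz
    linarith
  obtain ⟨y, hy, hvy⟩ := (hI 1).1 h1I
  obtain ⟨b, hb, rfl⟩ := (hP y).1 hy
  refine ⟨(d : ℤ) • b.1, htors b hb, ?_, ?_⟩
  · rw [B_zsmul_right, hvy]; simp
  · intro z hz
    obtain ⟨n, hn⟩ := b.2 z hz
    exact ⟨n, by rw [B_zsmul_left, hn]; push_cast; ring⟩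

lemma pair_to_splitElem {B : V →ₗ[ℚ] V →ₗ[ℚ] ℚ} (halt : ∀ v, B v v = 0)
    {L : Submodule ℤ V}
    {v : V} {d : ℕ} (hv : IsPrimitive L v) (hd : HasDiv B L v d)
    (hs : ∃ w ∈ L, B v w = d ∧ ∀ y ∈ L, ∃ n : ℤ, B w y = n * d) :
    IsSplitElem B L halt (discCls B L ⟨vstar v d, vstar_mem hd⟩) := by
  obtain ⟨w, hw, hvw, hwd⟩ := hs
  have hd0 : (d : ℚ) ≠ 0 := Nat.cast_ne_zero.mpr hd.1.ne'
  have hwv : B w v = -d := by rw [bilin_antisymm B halt, hvw]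
  have hord := order_vstar hv hd
  have hwdiv : vstar w d ∈ dualLattice B L := by
    intro y hy
    obtain ⟨n, hn⟩ := hwd y hy
    refine ⟨n, ?_⟩
    show B ((d : ℚ)⁻¹ • w) y = n
    rw [map_smul, LinearMap.smul_apply, hn, smul_eq_mul]; field_simp
  set a : dualLattice B L := ⟨vstar v d, vstar_mem hd⟩ with ha
  set b : dualLattice B L := ⟨vstar w d, hwdiv⟩ with hb
  have hav : ∀ y, B a.1 y = (d : ℚ)⁻¹ * B v y := fun y => by
    show B ((d : ℚ)⁻¹ • v) y = _
    rw [map_smul, LinearMap.smul_apply, smul_eq_mul]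
  have hbw : ∀ y, B b.1 y = (d : ℚ)⁻¹ * B w y := fun y => by
    show B ((d : ℚ)⁻¹ • w) y = _
    rw [map_smul, LinearMap.smul_apply, smul_eq_mul]
  have hda : (d : ℤ) • discCls B L a = 0 := by
    have : (d : ℤ) • discCls B L a = discCls B L ((d : ℤ) • a) := rfl
    rw [this, discCls_zero]
    have : (((d : ℤ) • a : dualLattice B L) : V) = v := by
      show (d : ℤ) • ((d : ℚ)⁻¹ • v) = v
      rw [← Int.cast_smul_eq_zsmul ℚ, smul_smul]
      push_cast
      rw [mul_inv_cancel₀ hd0, one_smul]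
    rw [this]; exact hv.1
  have hdb : (d : ℤ) • discCls B L b = 0 := by
    have : (d : ℤ) • discCls B L b = discCls B L ((d : ℤ) • b) := rfl
    rw [this, discCls_zero]
    have : (((d : ℤ) • b : dualLattice B L) : V) = w := by
      show (d : ℤ) • ((d : ℚ)⁻¹ • w) = w
      rw [← Int.cast_smul_eq_zsmul ℚ, smul_smul]
      push_cast
      rw [mul_inv_cancel₀ hd0, one_smul]
    rw [this]; exact hw
  let φa : ZMod d →+ DiscGroup B L :=
    ZMod.lift d ⟨zmultiplesHom _ (discCls B L a), by simpa using hda⟩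
  let φb : ZMod d →+ DiscGroup B L :=
    ZMod.lift d ⟨zmultiplesHom _ (discCls B L b), by simpa using hdb⟩
  have hφa : ∀ n : ℤ, φa n = n • discCls B L a := fun n => by simp [φa]
  have hφb : ∀ n : ℤ, φb n = n • discCls B L b := fun n => by simp [φb]
  let φ : ZMod d × ZMod d →+ DiscGroup B L := φa.coprod φb
  have hφ : ∀ s t : ℤ, φ ((s : ZMod d), (t : ZMod d)) = discCls B L (s • a + t • b) := by
    intro s t
    show φa s + φb t = _
    rw [hφa, hφb]; rfl
  have hcomb : ∀ s t : ℤ, ∀ y, B ((s • a + t • b : dualLattice B L) : V) y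
      = s * ((d : ℚ)⁻¹ * B v y) + t * ((d : ℚ)⁻¹ * B w y) := by
    intro s t y
    rw [Submodule.coe_add, Submodule.coe_smul, Submodule.coe_smul, map_add,
      LinearMap.add_apply, B_zsmul_left, B_zsmul_left, hav, hbw]
  have hinj : Function.Injective φ := by
    rw [injective_iff_map_eq_zero]
    rintro ⟨s, t⟩ h
    obtain ⟨s, rfl⟩ := ZMod.intCast_surjective s
    obtain ⟨t, rfl⟩ := ZMod.intCast_surjective t
    rw [hφ, discCls_zero] at h
    obtain ⟨n, hn⟩ := hd.2.1 _ h
    obtain ⟨m, hm⟩ := hwd _ h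
    rw [bilin_antisymm B halt, hcomb] at hn hm
    simp only [halt, hvw, hwv] at hn hm
    have h1 : (t : ℚ) = n * d := by rw [← hn]; field_simp; ring
    have h2 : (s : ℚ) = -m * d := by
      rw [neg_mul, ← hm]; field_simp; ring
    have h1' : t = n * d := by exact_mod_cast h1
    have h2' : s = -m * d := by exact_mod_cast h2
    rw [h1', h2']
    ext <;> simp
  have hmemD : ∀ x, x ∈ AddSubgroup.toIntSubmodule φ.range ↔
      ∃ s t : ℤ, discCls B L (s • a + t • b) = x := by
    intro x
    constructor
    · rintro ⟨⟨s, t⟩, rfl⟩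
      obtain ⟨s, rfl⟩ := ZMod.intCast_surjective s
      obtain ⟨t, rfl⟩ := ZMod.intCast_surjective t
      exact ⟨s, t, (hφ s t).symm⟩
    · rintro ⟨s, t, rfl⟩
      exact ⟨(s, t), hφ s t⟩
  refine ⟨AddSubgroup.toIntSubmodule φ.range, ?_, ?_, ?_, ?_⟩
  · rw [hmemD]
    exact ⟨1, 0, by simp⟩
  · rw [hord]
    exact ⟨(AddMonoidHom.ofInjective hinj).symm⟩
  · rw [eq_top_iff]
    rintro x -
    obtain ⟨y, rfl⟩ := Submodule.Quotient.mk_surjective _ x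
    obtain ⟨m, hm⟩ := y.2 v hv.1
    obtain ⟨n, hn⟩ := y.2 w hw
    rw [Submodule.mem_sup]
    refine ⟨discCls B L (n • a + (-m) • b), (hmemD _).2 ⟨_, _, rfl⟩,
      discCls B L (y - (n • a + (-m) • b)), ?_, ?_⟩
    · rw [mem_discOrth]
      intro z hz
      obtain ⟨s, t, hst⟩ := (hmemD _).1 hz
      rw [discCls_eq] at hst
      have hyv : B ((y - (n • a + (-m) • b) : dualLattice B L) : V) v = 0 := by
        rw [Submodule.coe_sub, map_sub, LinearMap.sub_apply, hm, hcomb, halt, hwv]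
        push_cast; field_simp; ring
      have hyw : B ((y - (n • a + (-m) • b) : dualLattice B L) : V) w = 0 := by
        rw [Submodule.coe_sub, map_sub, LinearMap.sub_apply, hn, hcomb, halt, hvw]
        push_cast; field_simp; ring
      obtain ⟨k, hk⟩ := (y - (n • a + (-m) • b)).2 _ hst
      refine ⟨-k, ?_⟩
      rw [map_sub, bilin_antisymm B halt _ ((s • a + t • b : dualLattice B L) : V), hcomb,
        bilin_antisymm B halt v, bilin_antisymm B halt w, hyv, hyw] at hk
      push_cast
      linear_combination -hk
    · show discCls B L ((n • a + (-m) • b) + (y - (n • a + (-m) • b))) = _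
      rw [add_sub_cancel]
      rfl
  · rw [eq_bot_iff]
    rintro x ⟨hx, hx2⟩
    obtain ⟨s, t, rfl⟩ := (hmemD _).1 hx
    rw [SetLike.mem_coe, mem_discOrth] at hx2
    obtain ⟨n, hn⟩ := hx2 a ((hmemD _).2 ⟨1, 0, by simp⟩)
    obtain ⟨m, hm⟩ := hx2 b ((hmemD _).2 ⟨0, 1, by simp⟩)
    rw [hcomb, bilin_antisymm B halt v, bilin_antisymm B halt w, hav, hav, halt, hvw] at hn
    rw [hcomb, bilin_antisymm B halt v, bilin_antisymm B halt w, hbw, hbw, halt, hwv] at hm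
    have h1 : (t : ℚ) = -n * d := by rw [neg_mul, ← hn]; field_simp; ring
    have h2 : (s : ℚ) = m * d := by
      rw [← hm]; field_simp; ring
    have h1' : t = -n * d := by exact_mod_cast h1
    have h2' : s = m * d := by exact_mod_cast h2
    show _ = _
    have : discCls B L (s • a + t • b) = s • discCls B L a + t • discCls B L b := rfl
    rw [this, h1', h2', mul_smul, mul_smul, hda, hdb]
    simp

/-! ### Orbits -/

/-- Equivalence under `Γ`. -/
def GRel (B : V →ₗ[ℚ] V →ₗ[ℚ] ℚ) (L : Submodule ℤ V) (u w : V) : Prop :=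
  ∃ γ : V ≃ₗ[ℚ] V, InGamma B L γ ∧ γ u = w

lemma GRel.symm {B : V →ₗ[ℚ] V →ₗ[ℚ] ℚ} {L : Submodule ℤ V} {u w : V}
    (h : GRel B L u w) : GRel B L w u := by
  obtain ⟨γ, ⟨⟨h1, h2⟩, h3⟩, rfl⟩ := h
  have hiso : IsIsometry B L γ.symm := by
    refine ⟨fun x => ?_, fun x y => ?_⟩
    · rw [h1 (γ.symm x), LinearEquiv.apply_symm_apply]
    · rw [← h2, LinearEquiv.apply_symm_apply, LinearEquiv.apply_symm_apply]
  refine ⟨γ.symm, ⟨hiso, fun x hx => ?_⟩, by simp⟩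
  have := h3 _ (isometry_dual_mem hiso hx)
  rw [LinearEquiv.apply_symm_apply] at this
  rw [← neg_sub]
  exact L.neg_mem this

lemma GRel.trans {B : V →ₗ[ℚ] V →ₗ[ℚ] ℚ} {L : Submodule ℤ V} {u w x : V}
    (h : GRel B L u w) (h' : GRel B L w x) : GRel B L u x := by
  obtain ⟨γ, ⟨⟨h1, h2⟩, h3⟩, rfl⟩ := h
  obtain ⟨δ, ⟨⟨k1, k2⟩, k3⟩, rfl⟩ := h'
  refine ⟨γ.trans δ, ⟨⟨fun y => ?_, fun y z => ?_⟩, fun y hy => ?_⟩, rfl⟩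
  · rw [h1, k1]; rfl
  · simp [k2, h2]
  · have e : (γ.trans δ) y - y = (δ (γ y) - γ y) + (γ y - y) := by simp
    rw [e]
    exact L.add_mem (k3 _ (isometry_dual_mem ⟨h1, h2⟩ hy)) (h3 _ hy)

/-- The symplectic transvection `x ↦ x + c (l,x) l`. -/
def tv (B : V →ₗ[ℚ] V →ₗ[ℚ] ℚ) (halt : ∀ v, B v v = 0) (l : V) (c : ℚ) : V ≃ₗ[ℚ] V :=
  LinearEquiv.ofLinearMap (LinearMap.id + c • (B l).smulRight l)
    (LinearMap.id + (-c) • (B l).smulRight l)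
    (by ext x; simp [halt]) (by ext x; simp [halt])

lemma tv_apply (B : V →ₗ[ℚ] V →ₗ[ℚ] ℚ) (halt : ∀ v, B v v = 0) (l : V) (c : ℚ) (x : V) :
    tv B halt l c x = x + (c * B l x) • l := by
  simp [tv, mul_smul]

lemma GRel.tv {B : V →ₗ[ℚ] V →ₗ[ℚ] ℚ} (halt : ∀ v, B v v = 0) {L : Submodule ℤ V}
    (hint : ∀ x ∈ L, ∀ y ∈ L, ∃ n : ℤ, B x y = (n : ℚ))
    {l : V} (hl : l ∈ L) (c : ℤ) (u : V) :
    GRel B L u (u + (c * B l u) • l) := by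
  have hmul : ∀ x, x ∈ dualLattice B L → ∀ c : ℤ, ((c : ℚ) * B l x) • l ∈ L := by
    intro x hx c
    obtain ⟨n, hn⟩ := hx l hl
    rw [bilin_antisymm B halt, hn]
    have : ((c : ℚ) * -n) = ((-(c * n) : ℤ) : ℚ) := by push_cast; ring
    rw [this, Int.cast_smul_eq_zsmul]
    exact L.smul_mem _ hl
  have hdual : ∀ x ∈ L, x ∈ dualLattice B L := fun x hx y hy => hint x hx y hy
  refine ⟨_root_.tv B halt l c, ⟨⟨fun x => ⟨fun hx => ?_, fun hx => ?_⟩, fun x y => ?_⟩,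
    fun x hx => ?_⟩, tv_apply B halt l c u⟩
  · rw [tv_apply]
    exact L.add_mem hx (hmul x (hdual x hx) c)
  · have h := hmul _ (hdual _ hx) c
    rw [tv_apply] at h hx
    have e : B l (x + ((c : ℚ) * B l x) • l) = B l x := by simp [halt]
    rw [e] at h
    simpa using L.sub_mem hx h
  · simp only [tv_apply, map_add, map_smul, LinearMap.add_apply, LinearMap.smul_apply,
      smul_eq_mul, halt]
    rw [bilin_antisymm B halt x l]; ring
  · rw [tv_apply, add_sub_cancel_left]
    exact hmul x hx c

lemma GRel.add {B : V →ₗ[ℚ] V →ₗ[ℚ] ℚ} (halt : ∀ v, B v v = 0) {L : Submodule ℤ V}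
    (hint : ∀ x ∈ L, ∀ y ∈ L, ∃ n : ℤ, B x y = (n : ℚ))
    {l : V} (hl : l ∈ L) (u : V) (h : B l u = 1 ∨ B l u = -1) :
    GRel B L u (u + l) := by
  rcases h with h | h
  · have := GRel.tv halt hint hl 1 u
    simpa [h] using this
  · have := GRel.tv halt hint hl (-1) u
    simpa [h] using this

lemma GRel.dual {B : V →ₗ[ℚ] V →ₗ[ℚ] ℚ} {L : Submodule ℤ V} {u w : V}
    (h : GRel B L u w) (hu : u ∈ dualLattice B L) : w ∈ dualLattice B L ∧ w - u ∈ L := by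
  obtain ⟨γ, hγ, rfl⟩ := h
  exact ⟨isometry_dual_mem hγ.1 hu, hγ.2 u hu⟩

lemma GRel.unim {B : V →ₗ[ℚ] V →ₗ[ℚ] ℚ} {L : Submodule ℤ V} {u w : V}
    (h : GRel B L u w) (hu : ∃ x ∈ L, B u x = 1) : ∃ x ∈ L, B w x = 1 := by
  obtain ⟨γ, hγ, rfl⟩ := h
  obtain ⟨x, hx, hux⟩ := hu
  exact ⟨γ x, (hγ.1.1 x).1 hx, by rw [hγ.1.2, hux]⟩

/-- Euclidean algorithm in the hyperbolic plane. -/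
lemma euclid {B : V →ₗ[ℚ] V →ₗ[ℚ] ℚ} (halt : ∀ v, B v v = 0) {L : Submodule ℤ V}
    (hint : ∀ x ∈ L, ∀ y ∈ L, ∃ n : ℤ, B x y = (n : ℚ))
    {e f : V} (he : e ∈ L) (hf : f ∈ L) (hef : B e f = 1) :
    ∀ (n : ℕ) (u : V) (α β : ℤ), B u f = α → B u e = β → α.natAbs ≤ n →
      ∃ u', GRel B L u u' ∧ B u' f = 0 := by
  have hfe : B f e = -1 := by rw [bilin_antisymm B halt, hef]
  have stepf : ∀ (u : V) (α β c : ℤ), B u f = α → B u e = β →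
      ∃ u', GRel B L u u' ∧ B u' f = α ∧ B u' e = ((β + c * α : ℤ) : ℚ) := by
    intro u α β c h1 h2
    refine ⟨_, GRel.tv halt hint hf c u, ?_, ?_⟩
    · simp [halt, h1]
    · rw [bilin_antisymm B halt f u, h1, map_add, map_smul, LinearMap.add_apply,
        LinearMap.smul_apply, hfe, h2, smul_eq_mul]
      push_cast; ring
  have stepe : ∀ (u : V) (α β c : ℤ), B u f = α → B u e = β →
      ∃ u', GRel B L u u' ∧ B u' f = ((α - c * β : ℤ) : ℚ) ∧ B u' e = β := by
    intro u α β c h1 h2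
    refine ⟨_, GRel.tv halt hint he c u, ?_, ?_⟩
    · rw [bilin_antisymm B halt e u, h2, map_add, map_smul, LinearMap.add_apply,
        LinearMap.smul_apply, hef, h1, smul_eq_mul]
      push_cast; ring
    · simp [halt, h2]
  intro n
  induction n with
  | zero =>
    intro u α β h1 h2 h3
    have : α = 0 := by omega
    exact ⟨u, ⟨LinearEquiv.refl _ _, ⟨⟨fun _ => Iff.rfl, fun _ _ => rfl⟩,
      fun x _ => by simp⟩, rfl⟩, by rw [h1, this]; simp⟩
  | succ n ih =>
    intro u α β h1 h2 h3
    by_cases h0 : α = 0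
    · exact ih u α β h1 h2 (by omega)
    by_cases hr : β % α = 0
    · obtain ⟨u1, r1, p1, q1⟩ := stepf u α β (1 - β / α) h1 h2
      have e1 : β + (1 - β / α) * α = α := by
        have := Int.emod_add_mul_ediv β α
        linear_combination hr - this
      rw [e1] at q1
      obtain ⟨u2, r2, p2, q2⟩ := stepe u1 α α 1 p1 q1
      exact ⟨u2, r1.trans r2, by rw [p2]; simp⟩
    · obtain ⟨u1, r1, p1, q1⟩ := stepf u α β (- (β / α)) h1 h2
      have e1 : β + (- (β / α)) * α = β % α := by
        have := Int.emod_add_mul_ediv β α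
        linear_combination -this
      rw [e1] at q1
      obtain ⟨u2, r2, p2, q2⟩ := stepe u1 α (β % α) (α / (β % α)) p1 q1
      have e2 : α - (α / (β % α)) * (β % α) = α % (β % α) := by
        have := Int.emod_add_mul_ediv α (β % α)
        linear_combination -this
      rw [e2] at p2
      have b1 := Int.emod_nonneg β h0
      have b2 := Int.emod_lt_abs β h0
      have b3 := Int.emod_nonneg α hr
      have b4 := Int.emod_lt_abs α hr
      rw [abs_of_nonneg b1] at b4
      have b5 : |α| = (α.natAbs : ℤ) := Int.abs_eq_natAbs α
      obtain ⟨u3, r3, p3⟩ := ih u2 _ _ p2 q2 (by omega)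
      exact ⟨u3, (r1.trans r2).trans r3, p3⟩

lemma normal_form {B : V →ₗ[ℚ] V →ₗ[ℚ] ℚ} (halt : ∀ v, B v v = 0) {L : Submodule ℤ V}
    (hint : ∀ x ∈ L, ∀ y ∈ L, ∃ n : ℤ, B x y = (n : ℚ))
    {e f : V} (he : e ∈ L) (hf : f ∈ L) (hef : B e f = 1)
    {u : V} (hu : u ∈ dualLattice B L) (hun : ∃ x ∈ L, B u x = 1) :
    ∃ u', GRel B L u u' ∧ B u' f = 1 ∧ B u' e = 0 := by
  have hfe : B f e = -1 := by rw [bilin_antisymm B halt, hef]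
  obtain ⟨α, hα⟩ := hu f hf
  obtain ⟨β, hβ⟩ := hu e he
  obtain ⟨u1, r1, h1⟩ := euclid halt hint he hf hef _ u α β hα hβ le_rfl
  obtain ⟨x, hx, hux⟩ := r1.unim hun
  obtain ⟨hu1, -⟩ := r1.dual hu
  obtain ⟨b, hb⟩ := hu1 e he
  obtain ⟨c, hc⟩ := hint e he x hx
  -- `a = -x + k f`
  set a : V := -x + (b + c) • f with ha
  have haL : a ∈ L := L.add_mem (L.neg_mem hx) (L.smul_mem _ hf)
  have hau : B a u1 = 1 := by
    rw [ha, bilin_antisymm B halt, map_add, map_neg, B_zsmul_right, h1, hux]; simp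
  have hea : B e a = b := by
    rw [ha, map_add, map_neg, B_zsmul_right, hef, hc]; push_cast; ring
  have r2 : GRel B L u1 (u1 + a) := GRel.add halt hint haL u1 (Or.inl hau)
  have r3 : GRel B L (u1 + a) (u1 + a + (e - a)) := by
    refine GRel.add halt hint (L.sub_mem he haL) _ (Or.inr ?_)
    simp only [map_sub, map_add, LinearMap.sub_apply, halt, hea, hau]
    rw [bilin_antisymm B halt e u1, hb]; ring
  have e4 : u1 + a + (e - a) = u1 + e := by abel
  rw [e4] at r3
  have r5 := GRel.tv halt hint hf (-b) (u1 + e)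
  refine ⟨_, ((r1.trans r2).trans r3).trans r5, ?_, ?_⟩
  · simp [halt, h1, hef]
  · have : B f (u1 + e) = -1 := by
      rw [map_add, hfe, bilin_antisymm B halt, h1]; ring
    rw [this]
    simp only [map_add, map_smul, LinearMap.add_apply, LinearMap.smul_apply, halt, hb, hfe,
      smul_eq_mul]
    push_cast; ring

lemma eichler {B : V →ₗ[ℚ] V →ₗ[ℚ] ℚ} (halt : ∀ v, B v v = 0) {L : Submodule ℤ V}
    (hint : ∀ x ∈ L, ∀ y ∈ L, ∃ n : ℤ, B x y = (n : ℚ))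
    {e f : V} (he : e ∈ L) (hf : f ∈ L) (hef : B e f = 1)
    {u w : V} (hu : u ∈ dualLattice B L) (hun : ∃ x ∈ L, B u x = 1)
    (hw : w ∈ dualLattice B L) (hwn : ∃ x ∈ L, B w x = 1) (huw : u - w ∈ L) :
    GRel B L u w := by
  obtain ⟨u1, r1, p1, q1⟩ := normal_form halt hint he hf hef hu hun
  obtain ⟨w1, r2, p2, q2⟩ := normal_form halt hint he hf hef hw hwn
  obtain ⟨hu1, k1⟩ := r1.dual hu
  obtain ⟨hw1, k2⟩ := r2.dual hw
  have hz : w1 - u1 ∈ L := by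
    have : w1 - u1 = (w1 - w) - (u1 - u) - (u - w) := by abel
    rw [this]
    exact L.sub_mem (L.sub_mem k2 k1) huw
  obtain ⟨m, hm⟩ := hu1 _ hz
  have hfu : B f u1 = -1 := by rw [bilin_antisymm B halt, p1]
  have hfw : B f w1 = -1 := by rw [bilin_antisymm B halt, p2]
  -- `l = z + k f`
  have r3 : GRel B L u1 (u1 + ((w1 - u1) + (-m - 1) • f)) := by
    refine GRel.add halt hint (L.add_mem hz (L.smul_mem _ hf)) _ (Or.inl ?_)
    rw [map_add, LinearMap.add_apply, B_zsmul_left, hfu, bilin_antisymm B halt, hm]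
    push_cast; ring
  have r4 := GRel.tv halt hint hf (m + 1) w1
  have e5 : u1 + ((w1 - u1) + (-m - 1) • f) = w1 + ((((m + 1 : ℤ) : ℚ)) * B f w1) • f := by
    rw [hfw, ← Int.cast_smul_eq_zsmul ℚ]
    push_cast; module
  rw [e5] at r3
  exact ((r1.trans r3).trans r4.symm).trans r2.symm

lemma torsion_of_span {L : Submodule ℤ V} (hspan : Submodule.span ℚ (L : Set V) = ⊤) (u : V) :
    ∃ n : ℕ, 0 < n ∧ n • u ∈ L := by
  have hu : u ∈ Submodule.span ℚ (L : Set V) := by rw [hspan]; trivial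
  induction hu using Submodule.span_induction with
  | mem x hx => exact ⟨1, one_pos, by simpa using hx⟩
  | zero => exact ⟨1, one_pos, by simp⟩
  | add x y _ _ hx hy =>
    obtain ⟨n, hn, hx⟩ := hx
    obtain ⟨m, hm, hy⟩ := hy
    refine ⟨n * m, Nat.mul_pos hn hm, ?_⟩
    rw [smul_add]
    refine L.add_mem ?_ ?_
    · rw [mul_comm, mul_smul]; exact L.smul_of_tower_mem _ hx
    · rw [mul_smul]; exact L.smul_of_tower_mem _ hy
  | smul q x _ hx =>
    obtain ⟨n, hn, hx⟩ := hx
    refine ⟨q.den * n, Nat.mul_pos q.den_pos hn, ?_⟩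
    have : (q.den * n) • q • x = q.num • (n • x) := by
      rw [← Nat.cast_smul_eq_nsmul ℚ, ← Int.cast_smul_eq_zsmul ℚ,
        ← Nat.cast_smul_eq_nsmul ℚ n, smul_smul, smul_smul]
      congr 1
      push_cast
      have := Rat.den_mul_eq_num q
      rw [← this]; ring
    rw [this]
    exact L.smul_mem _ hx

end helpers

/-- **Splitting criterion.** If `Λ = U₁ ⊕ U₂ ⊕ Λ''`, a primitive vector `v` is
splitting iff `[v*] ∈ D_Λ` is splitting; hence `v ↦ [v*]` induces a bijection from
`Γ_Λ`-classes of splitting primitive vectors onto the splitting elements of `D_Λ`. -/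
theorem splitting_criterion
    (V : Type) [AddCommGroup V] [Module ℚ V]
    (B : V →ₗ[ℚ] V →ₗ[ℚ] ℚ)
    (halt : ∀ v, B v v = 0)
    (hnd : ∀ v : V, (∀ w, B v w = 0) → v = 0)
    (L : Submodule ℤ V) (hfg : L.FG)
    (hspan : Submodule.span ℚ (L : Set V) = ⊤)
    (hint : ∀ x ∈ L, ∀ y ∈ L, ∃ n : ℤ, B x y = (n : ℚ))
    (e₁ f₁ e₂ f₂ : V) (L'' : Submodule ℤ V)
    (hdec : OrthoDecompUU B L e₁ f₁ e₂ f₂ L'') :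
    (∀ (v : V) (d : ℕ) (hv : IsPrimitive L v) (hd : HasDiv B L v d),
        IsSplitVec B L v ↔
          IsSplitElem B L halt (discCls B L ⟨vstar v d, vstar_mem hd⟩)) ∧
    (∀ (v w : V) (dv dw : ℕ) (hv : IsPrimitive L v) (hw : IsPrimitive L w)
        (hdv : HasDiv B L v dv) (hdw : HasDiv B L w dw),
        IsSplitVec B L v → IsSplitVec B L w →
        ((∃ γ : V ≃ₗ[ℚ] V, InGamma B L γ ∧ γ v = w) ↔
          discCls B L ⟨vstar v dv, vstar_mem hdv⟩ =
            discCls B L ⟨vstar w dw, vstar_mem hdw⟩)) ∧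
    (∀ x : DiscGroup B L, IsSplitElem B L halt x →
      ∃ (v : V) (d : ℕ) (hv : IsPrimitive L v) (hd : HasDiv B L v d),
        IsSplitVec B L v ∧ discCls B L ⟨vstar v d, vstar_mem hd⟩ = x) := by
  obtain ⟨he, hf, -, -, -, hef, -⟩ := hdec
  have part1 : ∀ (v : V) (d : ℕ) (hv : IsPrimitive L v) (hd : HasDiv B L v d),
        IsSplitVec B L v ↔
          IsSplitElem B L halt (discCls B L ⟨vstar v d, vstar_mem hd⟩) := by
    intro v d hv hd
    constructor
    · intro h
      exact pair_to_splitElem halt hv hd (split_to_pair halt hfg hv hd h)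
    · intro h
      exact pair_to_split halt hv hd (splitElem_to_pair halt hv hd h hint)
  refine ⟨part1, ?_, ?_⟩
  · intro v w dv dw hv hw hdv hdw _ _
    have hdv0 : (dv : ℚ) ≠ 0 := Nat.cast_ne_zero.mpr hdv.1.ne'
    constructor
    · rintro ⟨γ, hγ, rfl⟩
      have hdd : dv = dw := by
        apply Nat.dvd_antisymm
        · obtain ⟨x, hx, hxd⟩ := hdw.2.2
          have hx' : γ.symm x ∈ L := by
            rw [hγ.1.1, LinearEquiv.apply_symm_apply]; exact hx
          obtain ⟨n, hn⟩ := hdv.2.1 _ hx'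
          rw [← hγ.1.2, LinearEquiv.apply_symm_apply, hxd] at hn
          have : (dw : ℤ) = n * dv := by exact_mod_cast hn
          exact Int.natCast_dvd_natCast.1 ⟨n, by rw [this]; ring⟩
        · obtain ⟨x, hx, hxd⟩ := hdv.2.2
          obtain ⟨n, hn⟩ := hdw.2.1 _ ((hγ.1.1 x).1 hx)
          rw [hγ.1.2, hxd] at hn
          have : (dv : ℤ) = n * dw := by exact_mod_cast hn
          exact Int.natCast_dvd_natCast.1 ⟨n, by rw [this]; ring⟩
      subst hdd
      rw [discCls_eq]
      have h := hγ.2 _ (vstar_mem hdv)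
      have e : γ (vstar v dv) = vstar (γ v) dv := by simp [vstar]
      rw [e] at h
      rw [← neg_sub]
      exact L.neg_mem h
    · intro h
      have hdd : dv = dw := by
        rw [← order_vstar hv hdv, ← order_vstar hw hdw, h]
      subst hdd
      rw [discCls_eq] at h
      have hun : ∀ t, HasDiv B L t dv → ∃ x ∈ L, B (vstar t dv) x = 1 := by
        intro t ht
        obtain ⟨x, hx, hxd⟩ := ht.2.2
        refine ⟨x, hx, ?_⟩
        rw [vstar, map_smul, LinearMap.smul_apply, hxd, smul_eq_mul, inv_mul_cancel₀ hdv0]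
      obtain ⟨γ, hγ, hγv⟩ := eichler halt hint he hf hef (vstar_mem hdv) (hun v hdv)
        (vstar_mem hdw) (hun w hdw) h
      refine ⟨γ, hγ, ?_⟩
      rw [vstar, vstar, map_smul] at hγv
      exact smul_right_injective V (inv_ne_zero hdv0) hγv
  · intro x hx
    obtain ⟨c, rfl⟩ := Submodule.Quotient.mk_surjective _ x
    obtain ⟨m, hm⟩ := c.2 f₁ hf
    have heD : e₁ ∈ dualLattice B L := fun y hy => hint _ he y hy
    let u : dualLattice B L := c + (1 - m) • ⟨e₁, heD⟩
    have hcu : discCls B L u = discCls B L c := by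
      rw [discCls_eq]
      have : u.1 - c.1 = (1 - m) • e₁ := by simp [u]
      rw [this]
      exact L.smul_mem _ he
    have huf : B u.1 f₁ = 1 := by
      have : u.1 = c.1 + (1 - m) • e₁ := rfl
      rw [this, map_add, LinearMap.add_apply, B_zsmul_left, hm, hef]
      push_cast; ring
    set d := addOrderOf (discCls B L u) with hdef
    have hmemk : ∀ k : ℤ, k • u.1 ∈ L ↔ (d : ℤ) ∣ k := by
      intro k
      rw [hdef, addOrderOf_dvd_iff_zsmul_eq_zero]
      have : k • discCls B L u = discCls B L (k • u) := rfl
      rw [this, discCls_zero]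
      rfl
    have hdpos : 0 < d := by
      obtain ⟨n, hn, hnL⟩ := torsion_of_span hspan u.1
      have h1 : (d : ℤ) ∣ n := (hmemk n).1 (by simpa using hnL)
      have h2 : d ∣ n := by exact_mod_cast h1
      exact Nat.pos_of_dvd_of_pos h2 hn
    have hd0 : (d : ℚ) ≠ 0 := Nat.cast_ne_zero.mpr hdpos.ne'
    have hvL : (d : ℤ) • u.1 ∈ L := (hmemk d).2 dvd_rfl
    have hprim : IsPrimitive L ((d : ℤ) • u.1) := by
      refine ⟨hvL, le_antisymm ?_ ?_⟩
      · rintro y ⟨hy, hyL⟩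
        rw [SetLike.mem_coe, Submodule.restrictScalars_mem, Submodule.mem_span_singleton] at hy
        obtain ⟨q, rfl⟩ := hy
        obtain ⟨k, hk⟩ := hint _ hyL _ hf
        rw [map_smul, LinearMap.smul_apply, B_zsmul_left, huf, smul_eq_mul] at hk
        have e : q • (d : ℤ) • u.1 = k • u.1 := by
          rw [← Int.cast_smul_eq_zsmul ℚ, ← Int.cast_smul_eq_zsmul ℚ k, ← hk, smul_smul,
            mul_one]
        rw [e] at hyL ⊢
        obtain ⟨s, rfl⟩ := (hmemk k).1 hyL
        rw [Submodule.mem_span_singleton]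
        exact ⟨s, by rw [smul_smul, mul_comm]⟩
      · rw [Submodule.span_singleton_le_iff_mem]
        exact ⟨Submodule.mem_span_singleton_self _, hvL⟩
    have hdiv : HasDiv B L ((d : ℤ) • u.1) d := by
      refine ⟨hdpos, fun y hy => ?_, f₁, hf, ?_⟩
      · obtain ⟨n, hn⟩ := u.2 y hy
        exact ⟨n, by rw [B_zsmul_left, hn]; push_cast; ring⟩
      · rw [B_zsmul_left, huf]; simp
    have hst : (⟨vstar ((d : ℤ) • u.1) d, vstar_mem hdiv⟩ : dualLattice B L) = u := by
      apply Subtype.ext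
      show (d : ℚ)⁻¹ • ((d : ℤ) • u.1) = u.1
      rw [← Int.cast_smul_eq_zsmul ℚ, smul_smul]
      push_cast
      rw [inv_mul_cancel₀ hd0, one_smul]
    have hcls : discCls B L ⟨vstar ((d : ℤ) • u.1) d, vstar_mem hdiv⟩
        = Submodule.Quotient.mk c := by
      rw [hst]; exact hcu
    refine ⟨_, d, hprim, hdiv, ?_, hcls⟩
    rw [part1 _ d hprim hdiv, hcls]
    exact hx
end
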